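/- Let S be a set of n ≥ 3 points in ℝ² with no three points collinear, let k be the number of points of S lying in the interior of the convex hull of S, and let T be a triangulation of S. Then T contains at least 3n + 4k − 14 star-shaped polygons. -/

import Mathlib

open scoped BigOperators

noncomputable section

/-- Points of the plane. -/
abbrev Pt : Type := ℝ × ℝ

/-- Dot product on the plane. -/
def dotp (a b : Pt) : ℝ := a.1 * b.1 + a.2 * b.2

/-- The geometric conditions making `(V, E)` a plane straight-line graph:
every edge joins two distinct points of `V`, no point of `V` lies in the open
segment of an edge, and the open segments of two distinct edges are disjoint. -/
def ValidEdges (V : Finset Pt) (E : Finset (Sym2 Pt)) : Prop :=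
  (∀ a b : Pt, s(a, b) ∈ E → a ∈ V ∧ b ∈ V ∧ a ≠ b) ∧
  (∀ a b : Pt, s(a, b) ∈ E → ∀ v ∈ V, v ∉ openSegment ℝ a b) ∧
  (∀ a b c d : Pt, s(a, b) ∈ E → s(c, d) ∈ E → s(a, b) ≠ s(c, d) →
    openSegment ℝ a b ∩ openSegment ℝ c d = ∅)

/-- A plane straight-line graph. -/
structure PSLG where
  V : Finset Pt
  E : Finset (Sym2 Pt)
  valid : ValidEdges V E

/-- A path in `G`: a sequence of at least two vertices, consecutive ones joined by edges. -/
def IsPathIn (G : PSLG) (L : List Pt) : Prop :=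
  2 ≤ L.length ∧ L.Chain' (fun a b => s(a, b) ∈ G.E)

/-- An x-monotone path: x-coordinates strictly increasing along the path. -/
def IsXMonotonePath (G : PSLG) (L : List Pt) : Prop :=
  IsPathIn G L ∧ L.Chain' (fun a b => a.1 < b.1)

/-- Monotonicity of a vertex sequence in direction `u`. -/
def MonotoneInDir (u : Pt) (L : List Pt) : Prop :=
  L.Chain' (fun a b => 0 < dotp (b - a) u)

/-- A monotone path: monotone in some direction `u ≠ 0`. -/
def IsMonotonePath (G : PSLG) (L : List Pt) : Prop :=
  IsPathIn G L ∧ ∃ u : Pt, u ≠ 0 ∧ MonotoneInDir u L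

/-- The number of x-monotone paths in `G`. -/
def xMonCount (G : PSLG) : ℕ := Set.ncard {L : List Pt | IsXMonotonePath G L}

/-- The number of monotone paths in `G`, a path and its reversal counted once. -/
def monPathCount (G : PSLG) : ℕ :=
  Set.ncard {P : Set (List Pt) | ∃ L, IsMonotonePath G L ∧ P = {L, L.reverse}}

/-- Consecutive pairs along a cycle (including the wrap-around pair). -/
def cyclePairs (L : List Pt) : List (Pt × Pt) := L.zip (L.rotate 1)

/-- A cycle in `G`: at least 3 pairwise distinct vertices, cyclically joined by edges. -/
def IsCycleIn (G : PSLG) (L : List Pt) : Prop :=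
  3 ≤ L.length ∧ L.Nodup ∧ ∀ p ∈ cyclePairs L, s(p.1, p.2) ∈ G.E

/-- The union of the closed edge segments of a cycle. -/
def cycleBody (L : List Pt) : Set Pt := ⋃ p ∈ cyclePairs L, segment ℝ p.1 p.2

/-- A star-shaped polygon in `G`: a cycle for which some point `o` sees the boundary
in exactly one point along every ray emanating from `o`. -/
def IsStarShapedPolygon (G : PSLG) (L : List Pt) : Prop :=
  IsCycleIn G L ∧ ∃ o : Pt, ∀ d : Pt, d ≠ 0 →
    ∃! p : Pt, p ∈ cycleBody L ∧ ∃ t : ℝ, 0 ≤ t ∧ p = o + t • d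

/-- The edge set of a cycle, used to count polygons. -/
def cycleEdgeSet (L : List Pt) : Finset (Sym2 Pt) :=
  ((cyclePairs L).map (fun p => s(p.1, p.2))).toFinset

/-- The number of star-shaped polygons in `G`, counted by edge sets. -/
def starCount (G : PSLG) : ℕ :=
  Set.ncard {E' : Finset (Sym2 Pt) | ∃ L, IsStarShapedPolygon G L ∧ E' = cycleEdgeSet L}

/-- Cross product (signed area). -/
def crossp (a b : Pt) : ℝ := a.1 * b.2 - a.2 * b.1

/-- A convex polygon in `G`: a cycle whose vertices are in strictly convex position and
appear along the cycle in their convex-hull cyclic order; equivalently, for every directed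
edge of the cycle all other vertices lie strictly on the same (left or right) side. -/
def IsConvexPolygon (G : PSLG) (L : List Pt) : Prop :=
  IsCycleIn G L ∧
  ((∀ p ∈ cyclePairs L, ∀ v ∈ L, v ≠ p.1 → v ≠ p.2 → 0 < crossp (p.2 - p.1) (v - p.1)) ∨
   (∀ p ∈ cyclePairs L, ∀ v ∈ L, v ≠ p.1 → v ≠ p.2 → crossp (p.2 - p.1) (v - p.1) < 0))

/-- The number of convex polygons in `G`, counted by edge sets. -/
def convexCount (G : PSLG) : ℕ :=
  Set.ncard {E' : Finset (Sym2 Pt) | ∃ L, IsConvexPolygon G L ∧ E' = cycleEdgeSet L}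

/-- A triangulation: an edge-maximal plane straight-line graph. -/
def PSLG.IsTriangulation (G : PSLG) : Prop :=
  ∀ a ∈ G.V, ∀ b ∈ G.V, a ≠ b → s(a, b) ∉ G.E → ¬ ValidEdges G.V (insert s(a, b) G.E)

/-- An orientation of a PSLG: each edge `{a, b}` receives exactly one of the ordered
pairs `(a, b)`, `(b, a)`. -/
def IsOrientation (G : PSLG) (D : Finset (Pt × Pt)) : Prop :=
  (∀ p ∈ D, s(p.1, p.2) ∈ G.E) ∧
  ∀ a b : Pt, s(a, b) ∈ G.E →
    (((a, b) ∈ D ∧ (b, a) ∉ D) ∨ ((b, a) ∈ D ∧ (a, b) ∉ D))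

/-- A directed simple path in a directed graph on points. -/
def IsDirPath (D : Finset (Pt × Pt)) (L : List Pt) : Prop :=
  2 ≤ L.length ∧ L.Nodup ∧ L.Chain' (fun a b => (a, b) ∈ D)

/-- The number of directed simple paths. -/
def dirPathCount (D : Finset (Pt × Pt)) : ℕ := Set.ncard {L : List Pt | IsDirPath D L}

/-- No three of the points of `S` are collinear. -/
def NoThreeCollinear (S : Finset Pt) : Prop :=
  ∀ p ∈ S, ∀ q ∈ S, ∀ r ∈ S, p ≠ q → p ≠ r → q ≠ r → ¬ Collinear ℝ ({p, q, r} : Set Pt)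

/-- A maximal monotone path: not a proper subpath (up to reversal) of another
monotone path of `G`. -/
def IsMaximalMonotonePath (G : PSLG) (L : List Pt) : Prop :=
  IsMonotonePath G L ∧ ∀ M : List Pt, IsMonotonePath G M →
    (L <:+: M ∨ L.reverse <:+: M) → (L = M ∨ L.reverse = M)

open Filter Topology

/-- Twice the signed area of the triangle `a b c`. -/
def orient (a b c : Pt) : ℝ := crossp (b - a) (c - a)

theorem orient_rotate (a b c : Pt) : orient b c a = orient a b c := by
  simp only [orient, crossp, Prod.fst_sub, Prod.snd_sub]; ring

theorem orient_swap (a b c : Pt) : orient b a c = -orient a b c := by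
  simp only [orient, crossp, Prod.fst_sub, Prod.snd_sub]; ring

theorem orient_lineMap (a b c d : Pt) (t : ℝ) :
    orient a b (c + t • (d - c)) = (1 - t) * orient a b c + t * orient a b d := by
  simp only [orient, crossp, Prod.fst_sub, Prod.snd_sub, Prod.fst_add, Prod.snd_add,
    Prod.smul_fst, Prod.smul_snd, smul_eq_mul]
  ring

theorem orient_self_left (a b : Pt) : orient a b a = 0 := by
  simp [orient, crossp]

theorem orient_self_right (a b : Pt) : orient a b b = 0 := by
  simp only [orient, crossp, Prod.fst_sub, Prod.snd_sub]; ring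

theorem mem_openSegment_iff_lineMap {a b z : Pt} :
    z ∈ openSegment ℝ a b ↔ ∃ t : ℝ, 0 < t ∧ t < 1 ∧ z = a + t • (b - a) := by
  rw [openSegment_eq_image']
  simp only [Set.mem_image, Set.mem_Ioo, and_assoc, eq_comm]

theorem collinear_of_orient_eq_zero {a b c : Pt} (h : orient a b c = 0) :
    Collinear ℝ ({a, b, c} : Set Pt) := by
  by_cases hab : a = b
  · subst hab
    simpa using collinear_pair ℝ a c
  · rw [collinear_iff_of_mem (p₀ := a) (by simp)]
    refine ⟨b - a, ?_⟩
    have hpos : 0 < (b.1 - a.1) ^ 2 + (b.2 - a.2) ^ 2 := by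
      by_contra hle
      apply hab
      have h1 : b.1 - a.1 = 0 := by nlinarith [sq_nonneg (b.1 - a.1), sq_nonneg (b.2 - a.2)]
      have h2 : b.2 - a.2 = 0 := by nlinarith [sq_nonneg (b.1 - a.1), sq_nonneg (b.2 - a.2)]
      exact Prod.ext (by linarith) (by linarith)
    simp only [orient, crossp, Prod.fst_sub, Prod.snd_sub] at h
    rintro p (rfl | rfl | rfl)
    · exact ⟨0, by simp⟩
    · exact ⟨1, by simp⟩
    · refine ⟨((b.1 - a.1) * (p.1 - a.1) + (b.2 - a.2) * (p.2 - a.2)) /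
        ((b.1 - a.1) ^ 2 + (b.2 - a.2) ^ 2), ?_⟩
      apply Prod.ext
      · simp only [vadd_eq_add, Prod.fst_add, Prod.smul_fst, Prod.fst_sub, smul_eq_mul]
        field_simp
        linear_combination (-(b.2 - a.2)) * h
      · simp only [vadd_eq_add, Prod.snd_add, Prod.smul_snd, Prod.snd_sub, smul_eq_mul]
        field_simp
        linear_combination (b.1 - a.1) * h

/-- Coordinates with respect to a basis of the plane. -/
theorem exists_coords {u v : Pt} (h : crossp u v ≠ 0) :
    ∃ A B : Pt →ₗ[ℝ] ℝ, (∀ z, z = A z • u + B z • v) ∧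
      (∀ z w, crossp z w = crossp u v * (A z * B w - B z * A w)) ∧
      A u = 1 ∧ A v = 0 ∧ B u = 0 ∧ B v = 1 := by
  let A : Pt →ₗ[ℝ] ℝ :=
    { toFun := fun z => crossp z v / crossp u v
      map_add' := fun z w => by simp only [crossp, Prod.fst_add, Prod.snd_add]; ring
      map_smul' := fun t z => by
        simp only [crossp, Prod.smul_fst, Prod.smul_snd, smul_eq_mul, RingHom.id_apply]; ring }
  let B : Pt →ₗ[ℝ] ℝ :=
    { toFun := fun z => crossp u z / crossp u v
      map_add' := fun z w => by simp only [crossp, Prod.fst_add, Prod.snd_add]; ring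
      map_smul' := fun t z => by
        simp only [crossp, Prod.smul_fst, Prod.smul_snd, smul_eq_mul, RingHom.id_apply]; ring }
  have hA : ∀ z, A z = crossp z v / crossp u v := fun _ => rfl
  have hB : ∀ z, B z = crossp u z / crossp u v := fun _ => rfl
  refine ⟨A, B, fun z => Prod.ext ?_ ?_, fun z w => ?_, ?_, ?_, ?_, ?_⟩
  · simp only [hA, hB, Prod.fst_add, Prod.smul_fst, smul_eq_mul]
    rw [div_mul_eq_mul_div, div_mul_eq_mul_div, ← add_div, eq_div_iff h]
    simp only [crossp]; ring
  · simp only [hA, hB, Prod.snd_add, Prod.smul_snd, smul_eq_mul]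
    rw [div_mul_eq_mul_div, div_mul_eq_mul_div, ← add_div, eq_div_iff h]
    simp only [crossp]; ring
  · have e : crossp z w * crossp u v = crossp z v * crossp u w - crossp u z * crossp w v := by
      simp only [crossp]; ring
    rw [hA, hB, hA, hB]
    field_simp
    linear_combination e
  · rw [hA, div_self h]
  · rw [hA]; simp [crossp, mul_comm]
  · rw [hB]; simp [crossp, mul_comm]
  · rw [hB, div_self h]

theorem orient_ne_zero {V : Finset Pt} (hgen : NoThreeCollinear V) {a b c : Pt} (ha : a ∈ V)
    (hb : b ∈ V) (hc : c ∈ V) (hab : a ≠ b) (hac : a ≠ c) (hbc : b ≠ c) : orient a b c ≠ 0 :=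
  fun h => hgen a ha b hb c hc hab hac hbc (collinear_of_orient_eq_zero h)

theorem eq_or_eq_of_orient_eq_zero {V : Finset Pt} (hgen : NoThreeCollinear V) {a b c : Pt}
    (ha : a ∈ V) (hb : b ∈ V) (hc : c ∈ V) (hab : a ≠ b) (h : orient a b c = 0) :
    c = a ∨ c = b := by
  by_contra! hne
  exact orient_ne_zero hgen ha hb hc hab hne.1.symm hne.2.symm h

/-- In general position, two segments with a common interior point cross properly. -/
theorem orient_ne_zero_of_crossing {V : Finset Pt} (hgen : NoThreeCollinear V) {a c d e x : Pt}
    (ha : a ∈ V) (hc : c ∈ V) (hd : d ∈ V) (he : e ∈ V) (hac : a ≠ c) (hde : d ≠ e)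
    (hne : s(a, c) ≠ s(d, e)) (hx : x ∈ openSegment ℝ a c) (hx' : x ∈ openSegment ℝ d e) :
    orient d e a ≠ 0 := by
  intro h0
  obtain ⟨t, ht0, ht1, rfl⟩ := mem_openSegment_iff_lineMap.1 hx
  obtain ⟨r, -, -, hr⟩ := mem_openSegment_iff_lineMap.1 hx'
  have h1 := orient_lineMap d e a c t
  rw [hr, orient_lineMap, orient_self_left, orient_self_right, h0] at h1
  have h2 : orient d e c = 0 := by
    have : t * orient d e c = 0 := by linarith
    exact (mul_eq_zero.1 this).resolve_left ht0.ne'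
  have h3 := eq_or_eq_of_orient_eq_zero hgen hd he ha hde h0
  have h4 := eq_or_eq_of_orient_eq_zero hgen hd he hc hde h2
  rcases h3 with rfl | rfl <;> rcases h4 with rfl | rfl
  · exact hac rfl
  · exact hne rfl
  · exact hne Sym2.eq_swap
  · exact hac rfl

namespace PSLG

variable {G : PSLG}

theorem left_mem {a b : Pt} (h : s(a, b) ∈ G.E) : a ∈ G.V := (G.valid.1 a b h).1

theorem right_mem {a b : Pt} (h : s(a, b) ∈ G.E) : b ∈ G.V := (G.valid.1 a b h).2.1

theorem ne_of_edge {a b : Pt} (h : s(a, b) ∈ G.E) : a ≠ b := (G.valid.1 a b h).2.2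

theorem edge_symm {a b : Pt} (h : s(a, b) ∈ G.E) : s(b, a) ∈ G.E := by
  rwa [Sym2.eq_swap]

theorem notMem_openSegment {a b v : Pt} (h : s(a, b) ∈ G.E) (hv : v ∈ G.V) :
    v ∉ openSegment ℝ a b := G.valid.2.1 a b h v hv

theorem edge_eq_of_mem {a b c d x : Pt} (h : s(a, b) ∈ G.E) (h' : s(c, d) ∈ G.E)
    (hx : x ∈ openSegment ℝ a b) (hx' : x ∈ openSegment ℝ c d) : s(a, b) = s(c, d) := by
  by_contra hne
  have := G.valid.2.2 a b c d h h' hne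
  exact (this ▸ (⟨hx, hx'⟩ : x ∈ openSegment ℝ a b ∩ openSegment ℝ c d) : x ∈ (∅ : Set Pt))

theorem IsTriangulation.exists_crossing (htri : G.IsTriangulation) (hgen : NoThreeCollinear G.V)
    {a c : Pt} (ha : a ∈ G.V) (hc : c ∈ G.V) (hac : a ≠ c) (hE : s(a, c) ∉ G.E) :
    ∃ d e x, s(d, e) ∈ G.E ∧ x ∈ openSegment ℝ a c ∧ x ∈ openSegment ℝ d e := by
  by_contra! hno
  refine htri a ha c hc hac hE ⟨?_, ?_, ?_⟩
  · intro p q hpq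
    rcases Finset.mem_insert.1 hpq with h | h
    · rcases Sym2.eq_iff.1 h with ⟨rfl, rfl⟩ | ⟨rfl, rfl⟩
      · exact ⟨ha, hc, hac⟩
      · exact ⟨hc, ha, hac.symm⟩
    · exact G.valid.1 p q h
  · have key : ∀ v ∈ G.V, v ∉ openSegment ℝ a c := by
      intro v hv hmem
      obtain ⟨t, ht0, ht1, rfl⟩ := mem_openSegment_iff_lineMap.1 hmem
      have h0 : orient a c (a + t • (c - a)) = 0 := by
        rw [orient_lineMap, orient_self_left, orient_self_right]; ring
      rcases eq_or_eq_of_orient_eq_zero hgen ha hc hv hac h0 with h | h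
      · have : t • (c - a) = 0 := by simpa using h
        rcases smul_eq_zero.1 this with h | h
        · exact ht0.ne' h
        · exact hac (sub_eq_zero.1 h).symm
      · have : (1 - t) • (c - a) = 0 := by
          rw [sub_smul, one_smul, sub_eq_zero, eq_comm, ← sub_eq_zero]
          rw [← sub_eq_zero] at h
          rw [← h]; abel
        rcases smul_eq_zero.1 this with h | h
        · linarith
        · exact hac (sub_eq_zero.1 h).symm
    intro p q hpq v hv
    rcases Finset.mem_insert.1 hpq with h | h
    · rcases Sym2.eq_iff.1 h with ⟨rfl, rfl⟩ | ⟨rfl, rfl⟩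
      · exact key v hv
      · rw [openSegment_symm]; exact key v hv
    · exact G.valid.2.1 p q h v hv
  · have key : ∀ p q d e, s(p, q) = s(a, c) → s(d, e) ∈ G.E →
        openSegment ℝ p q ∩ openSegment ℝ d e = ∅ := by
      intro p q d e hpq hde
      rw [Set.eq_empty_iff_forall_notMem]
      rintro x ⟨hx, hx'⟩
      rcases Sym2.eq_iff.1 hpq with ⟨rfl, rfl⟩ | ⟨rfl, rfl⟩
      · exact hno d e x hde hx hx'
      · rw [openSegment_symm] at hx
        exact hno d e x hde hx hx'
    intro p q d e h1 h2 hne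
    rcases Finset.mem_insert.1 h1 with h | h <;> rcases Finset.mem_insert.1 h2 with h' | h'
    · exact absurd (h.trans h'.symm) hne
    · exact key p q d e h h'
    · rw [Set.inter_comm]; exact key d e p q h' h
    · exact G.valid.2.2 p q d e h h' hne

end PSLG

theorem apply_lineMap_sub (A : Pt →ₗ[ℝ] ℝ) (a z w : Pt) (t : ℝ) :
    A (z + t • (w - z) - a) = A (z - a) + t * (A (w - a) - A (z - a)) := by
  simp only [map_sub, map_add, map_smul, smul_eq_mul]; ring

namespace PSLG

variable {G : PSLG}

set_option maxHeartbeats 800000 in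
/-- If the first edge `d e` blocking the view from `a` to `c` is hit at `a + τ • (c - a)`, then `a`
has a neighbor in the angular region between `c` and `d`. -/
theorem IsTriangulation.exists_adj_of_first_crossing (htri : G.IsTriangulation)
    (hgen : NoThreeCollinear G.V) {a c d e : Pt} {τ : ℝ} (ha : a ∈ G.V) (hc : c ∈ G.V)
    (hac : a ≠ c) (hE : s(a, c) ∉ G.E) (hde : s(d, e) ∈ G.E) (hτ0 : 0 < τ) (hτ1 : τ < 1)
    (hx : a + τ • (c - a) ∈ openSegment ℝ d e)
    (hmin : ∀ f h t, s(f, h) ∈ G.E → 0 < t → t < τ → a + t • (c - a) ∉ openSegment ℝ f h) :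
    ∃ (p : Pt) (α β : ℝ), s(a, p) ∈ G.E ∧ 0 ≤ α ∧ 0 < β ∧
      p - a = α • (τ • (c - a)) + β • (d - a) := by
  have hd := left_mem hde
  have hne : s(a, c) ≠ s(d, e) := fun h => hE (h ▸ hde)
  have hx0 : a + τ • (c - a) ∈ openSegment ℝ a c :=
    mem_openSegment_iff_lineMap.2 ⟨τ, hτ0, hτ1, rfl⟩
  have hacd : orient a c d ≠ 0 := orient_ne_zero_of_crossing hgen hd (right_mem hde) ha hc
    (ne_of_edge hde) hac hne.symm hx hx0
  have hcr : crossp (τ • (c - a)) (d - a) ≠ 0 := by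
    have : crossp (τ • (c - a)) (d - a) = τ * orient a c d := by
      simp only [orient, crossp, Prod.smul_fst, Prod.smul_snd, smul_eq_mul]; ring
    rw [this]; exact mul_ne_zero hτ0.ne' hacd
  obtain ⟨A, B, hdec, hcross, hA1, hA0, hB0, hB1⟩ := exists_coords hcr
  have hPaff := apply_lineMap_sub A a
  have hQaff := apply_lineMap_sub B a
  have hinj : ∀ z w, A (z - a) = A (w - a) → B (z - a) = B (w - a) → z = w := by
    intro z w h1 h2
    have := hdec (z - a)
    rw [h1, h2, ← hdec (w - a)] at this
    exact sub_left_injective this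
  have hor : ∀ z w, orient a z w = crossp (τ • (c - a)) (d - a) *
      (A (z - a) * B (w - a) - B (z - a) * A (w - a)) := fun z w => hcross _ _
  generalize crossp (τ • (c - a)) (d - a) = κ at hcr hor
  have hPa : A (a - a) = 0 := by simp
  have hQa : B (a - a) = 0 := by simp
  have hPx : A (a + τ • (c - a) - a) = 1 := by rwa [add_sub_cancel_left]
  have hQx : B (a + τ • (c - a) - a) = 0 := by rwa [add_sub_cancel_left]
  have hPc : τ * A (c - a) = 1 := by rw [hPaff, hPa] at hPx; linarith
  have hQc : B (c - a) = 0 := by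
    rw [hQaff, hQa] at hQx
    exact (mul_eq_zero.1 (by linarith : τ * B (c - a) = 0)).resolve_left hτ0.ne'
  obtain ⟨θ, hθ0, hθ1, hθ⟩ := mem_openSegment_iff_lineMap.1 hx
  have hPe : θ * A (e - a) = 1 := by rw [hθ, hPaff, hA0] at hPx; linarith
  have hQe : θ * B (e - a) = θ - 1 := by rw [hθ, hQaff, hB1] at hQx; linarith
  obtain ⟨p, hpC, hpmax⟩ := (G.V.filter fun z => 0 ≤ A (z - a) ∧ 0 < B (z - a) ∧
      A (z - a) + B (z - a) ≤ 1).exists_max_image (fun z => A (z - a) / B (z - a))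
      ⟨d, Finset.mem_filter.2 ⟨hd, by rw [hA0], by rw [hB1]; norm_num, by rw [hA0, hB1]; norm_num⟩⟩
  obtain ⟨hp, hPp, hQp, hSp⟩ := Finset.mem_filter.1 hpC
  by_cases hap : s(a, p) ∈ G.E
  · exact ⟨p, _, _, hap, hPp, hQp, hdec _⟩
  exfalso
  have hane : a ≠ p := by rintro rfl; rw [hQa] at hQp; exact hQp.false
  obtain ⟨f, g, y, hfg, hyap, hyfg, hneg⟩ : ∃ f g y, s(f, g) ∈ G.E ∧ y ∈ openSegment ℝ a p ∧
      y ∈ openSegment ℝ f g ∧ A (p - a) * B (g - a) - B (p - a) * A (g - a) < 0 := by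
    obtain ⟨f, g, y, hfg, hyap, hyfg⟩ := htri.exists_crossing hgen ha hp hane hap
    have hne' : s(f, g) ≠ s(a, p) := fun h => hap (h ▸ hfg)
    have h0 : orient a p g ≠ 0 := by
      refine orient_ne_zero_of_crossing hgen (right_mem hfg) (left_mem hfg) ha hp
        (ne_of_edge hfg).symm hane (Sym2.eq_swap.trans_ne hne') ?_ hyap
      rwa [openSegment_symm]
    rw [hor] at h0
    have h1 := right_ne_zero_of_mul h0
    rcases lt_or_gt_of_ne h1 with h | h
    · exact ⟨f, g, y, hfg, hyap, hyfg, h⟩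
    · refine ⟨g, f, y, edge_symm hfg, hyap, by rwa [openSegment_symm], ?_⟩
      obtain ⟨r, hr0, hr1, hr⟩ := mem_openSegment_iff_lineMap.1 hyap
      obtain ⟨t, ht0, ht1, ht⟩ := mem_openSegment_iff_lineMap.1 hyfg
      have hP := congrArg (fun z => A (z - a)) (hr.symm.trans ht)
      have hQ := congrArg (fun z => B (z - a)) (hr.symm.trans ht)
      simp only [hPaff, hQaff, hPa, hQa] at hP hQ
      have : (1 - t) * (A (p - a) * B (f - a) - B (p - a) * A (f - a)) +
          t * (A (p - a) * B (g - a) - B (p - a) * A (g - a)) = 0 := by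
        linear_combination B (p - a) * hP - A (p - a) * hQ
      nlinarith
  obtain ⟨r, hr0, hr1, hr⟩ := mem_openSegment_iff_lineMap.1 hyap
  obtain ⟨t, ht0, ht1, ht⟩ := mem_openSegment_iff_lineMap.1 hyfg
  have hPy : A (y - a) = r * A (p - a) := by rw [hr, hPaff, hPa]; ring
  have hQy : B (y - a) = r * B (p - a) := by rw [hr, hQaff, hQa]; ring
  have hSy : A (y - a) + B (y - a) < 1 := by rw [hPy, hQy]; nlinarith
  have hPy0 : 0 ≤ A (y - a) := by rw [hPy]; positivity
  have hQy0 : 0 < B (y - a) := by rw [hQy]; positivity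
  -- points between `y` and `g` lie on the edge `f g`
  have hon : ∀ l : ℝ, 0 ≤ l → l < 1 → y + l • (g - y) ∈ openSegment ℝ f g := by
    intro l hl0 hl1
    refine mem_openSegment_iff_lineMap.2 ⟨t + l * (1 - t), by nlinarith, by nlinarith, ?_⟩
    rw [ht]; module
  have hpg : A (p - a) * B (g - a) < B (p - a) * A (g - a) := by linarith
  -- the edge `f g` cannot leave the triangle through `d e`
  have hexit : ∀ l : ℝ, l = (1 - (A (y - a) + B (y - a))) /
      (A (g - a) + B (g - a) - (A (y - a) + B (y - a))) →
      1 < A (g - a) + B (g - a) → 0 ≤ B (y - a) + l * (B (g - a) - B (y - a)) → False := by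
    intro l hl hSg hQw
    have hden : 0 < A (g - a) + B (g - a) - (A (y - a) + B (y - a)) := by linarith
    have hl0 : 0 < l := by rw [hl]; exact div_pos (by linarith) hden
    have hl1 : l < 1 := by rw [hl, div_lt_one hden]; linarith
    have hle : l * (A (g - a) + B (g - a) - (A (y - a) + B (y - a))) =
        1 - (A (y - a) + B (y - a)) := by rw [hl, div_mul_cancel₀ _ hden.ne']
    have hw := hon l hl0.le hl1
    have hPw := hPaff y g l
    have hQw' := hQaff y g l
    generalize y + l • (g - y) = w at hw hPw hQw'
    have hSw : A (w - a) + B (w - a) = 1 := by rw [hPw, hQw']; linarith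
    have hPw0 : 0 < A (w - a) := by
      have h1 : A (p - a) * B (w - a) - B (p - a) * A (w - a) =
          l * (A (p - a) * B (g - a) - B (p - a) * A (g - a)) := by
        rw [hPw, hQw', hPy, hQy]; ring
      have h2 : l * (A (p - a) * B (g - a) - B (p - a) * A (g - a)) < 0 :=
        mul_neg_of_pos_of_neg hl0 hneg
      have h3 : 0 ≤ A (p - a) * B (w - a) := mul_nonneg hPp (hQw'.symm ▸ hQw)
      have h4 : 0 < B (p - a) * A (w - a) := by linarith
      exact (pos_iff_pos_of_mul_pos h4).1 hQp
    have hwde : w ∈ openSegment ℝ d e := by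
      refine mem_openSegment_iff_lineMap.2 ⟨θ * A (w - a), by positivity, ?_, ?_⟩
      · have : A (w - a) ≤ 1 := by rw [← hQw'] at hQw; linarith
        nlinarith
      · apply hinj
        · rw [hPaff, hA0]; linear_combination (-A (w - a)) * hPe
        · rw [hQaff, hB1]; linear_combination hSw - A (w - a) * hQe
    have heq := edge_eq_of_mem hfg hde hw hwde
    have hSe : A (e - a) + B (e - a) = 1 := by
      have : θ * (A (e - a) + B (e - a) - 1) = 0 := by linarith
      have := (mul_eq_zero.1 this).resolve_left hθ0.ne'
      linarith
    rcases Sym2.eq_iff.1 heq with ⟨-, rfl⟩ | ⟨-, rfl⟩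
    · linarith
    · rw [hA0, hB1] at hSg; linarith
  rcases le_or_gt (B (g - a)) 0 with hQg | hQg
  · -- the edge `f g` crosses the ray from `a` to `c`
    have hden : 0 < B (y - a) - B (g - a) := by linarith
    obtain ⟨m, hm⟩ : ∃ m, m = B (y - a) / (B (y - a) - B (g - a)) := ⟨_, rfl⟩
    have hme : m * (B (y - a) - B (g - a)) = B (y - a) := by rw [hm, div_mul_cancel₀ _ hden.ne']
    have hm0 : 0 < m := by rw [hm]; exact div_pos hQy0 hden
    have hm1 : m ≤ 1 := by rw [hm, div_le_one hden]; linarith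
    have hPz := hPaff y g m
    have hQz := hQaff y g m
    have hzon := hon m hm0.le
    generalize y + m • (g - y) = z at hPz hQz hzon
    have hQz0 : B (z - a) = 0 := by rw [hQz]; linarith
    have hPz0 : 0 < A (z - a) := by
      have h1 : A (p - a) * B (z - a) - B (p - a) * A (z - a) =
          m * (A (p - a) * B (g - a) - B (p - a) * A (g - a)) := by
        rw [hPz, hQz, hPy, hQy]; ring
      have h2 : m * (A (p - a) * B (g - a) - B (p - a) * A (g - a)) < 0 :=
        mul_neg_of_pos_of_neg hm0 hneg
      have h4 : 0 < B (p - a) * A (z - a) := by rw [hQz0] at h1; linarith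
      exact (pos_iff_pos_of_mul_pos h4).1 hQp
    have hgc : B (g - a) = 0 → g = c := by
      intro h
      have h0 : orient a c g = 0 := by rw [hor, h, hQc]; ring
      rcases eq_or_eq_of_orient_eq_zero hgen ha hc (right_mem hfg) hac h0 with rfl | h
      · rw [hPa, hQa] at hpg; linarith
      · exact h
    have hPc1 : 1 < A (c - a) := by
      by_contra h
      have := mul_le_mul_of_nonneg_left (not_lt.1 h) hτ0.le
      linarith
    have hmlt : A (z - a) ≤ 1 → m < 1 := by
      intro hle
      refine lt_of_le_of_ne hm1 fun h => ?_
      rw [h] at hme hPz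
      have := hgc (by linarith)
      rw [this] at hPz
      linarith
    rcases lt_or_ge (A (z - a)) 1 with hlt | hge
    · refine hmin f g (A (z - a) * τ) hfg (by positivity)
        (by linarith [mul_lt_mul_of_pos_right hlt hτ0]) ?_
      have : a + (A (z - a) * τ) • (c - a) = z := by
        apply hinj
        · rw [hPaff, hPa]; linear_combination A (z - a) * hPc
        · rw [hQaff, hQa, hQc, hQz0]; ring
      rw [this]
      exact hzon (hmlt hlt.le)
    · have hSz : A (z - a) + B (z - a) = A (y - a) + B (y - a) +
          m * (A (g - a) + B (g - a) - (A (y - a) + B (y - a))) := by rw [hPz, hQz]; ring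
      have hdpos : 0 < A (g - a) + B (g - a) - (A (y - a) + B (y - a)) := by
        have : 0 < m * (A (g - a) + B (g - a) - (A (y - a) + B (y - a))) := by linarith
        exact (pos_iff_pos_of_mul_pos this).1 hm0
      have hSg : 1 < A (g - a) + B (g - a) := by
        rcases eq_or_lt_of_le hge with h | h
        · linarith [mul_lt_mul_of_pos_right (hmlt h.symm.le) hdpos]
        · linarith [mul_le_mul_of_nonneg_right hm1 hdpos.le]
      refine hexit _ rfl hSg ?_
      have hlm : (1 - (A (y - a) + B (y - a))) /
          (A (g - a) + B (g - a) - (A (y - a) + B (y - a))) ≤ m := by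
        rw [div_le_iff₀ hdpos]; linarith
      generalize (1 - (A (y - a) + B (y - a))) /
          (A (g - a) + B (g - a) - (A (y - a) + B (y - a))) = l at hlm
      linarith [mul_le_mul_of_nonneg_right hlm hden.le]
  · have hPg : 0 < A (g - a) := by
      have : 0 < B (p - a) * A (g - a) := lt_of_le_of_lt (by positivity) hpg
      exact (pos_iff_pos_of_mul_pos this).1 hQp
    rcases le_or_gt (A (g - a) + B (g - a)) 1 with hSg | hSg
    · have := hpmax g (Finset.mem_filter.2 ⟨right_mem hfg, hPg.le, hQg, hSg⟩)
      rw [div_le_div_iff₀ hQg hQp] at this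
      linarith
    · refine hexit _ rfl hSg ?_
      have hden : 0 < A (g - a) + B (g - a) - (A (y - a) + B (y - a)) := by linarith
      have hl0 := div_pos (by linarith : 0 < 1 - (A (y - a) + B (y - a))) hden
      have hl1 := (div_lt_one hden).2 (by linarith : 1 - (A (y - a) + B (y - a)) < _)
      generalize (1 - (A (y - a) + B (y - a))) /
          (A (g - a) + B (g - a) - (A (y - a) + B (y - a))) = l at hl0 hl1
      linarith [mul_pos hl0 hQg, mul_pos (sub_pos.2 hl1) hQy0]

/-- In a triangulation, a vertex has a neighbor in every open half-plane bounded by a line through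
it that contains a vertex. -/
theorem IsTriangulation.exists_adj_pos (htri : G.IsTriangulation) (hgen : NoThreeCollinear G.V)
    {a c : Pt} (ha : a ∈ G.V) (hc : c ∈ G.V) (g : Pt →ₗ[ℝ] ℝ) (hg : 0 < g (c - a)) :
    ∃ p, s(a, p) ∈ G.E ∧ 0 < g (p - a) := by
  classical
  by_cases hE : s(a, c) ∈ G.E
  · exact ⟨c, hE, hg⟩
  have hac : a ≠ c := by rintro rfl; simp at hg
  have hτ : ∀ d e t, s(d, e) ∈ G.E → 0 < t → t < 1 → a + t • (c - a) ∈ openSegment ℝ d e →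
      t = orient d e a / (orient d e a - orient d e c) := by
    intro d e t hde ht0 ht1 hmem
    have hne : s(a, c) ≠ s(d, e) := fun h => hE (h ▸ hde)
    have h0 := orient_ne_zero_of_crossing hgen ha hc (left_mem hde) (right_mem hde) hac
      (ne_of_edge hde) hne (mem_openSegment_iff_lineMap.2 ⟨t, ht0, ht1, rfl⟩) hmem
    obtain ⟨r, -, -, hr⟩ := mem_openSegment_iff_lineMap.1 hmem
    have h1 := orient_lineMap d e a c t
    rw [hr, orient_lineMap, orient_self_left, orient_self_right] at h1
    have h2 : t * (orient d e a - orient d e c) = orient d e a := by linarith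
    have h3 : orient d e a - orient d e c ≠ 0 := by
      intro h; rw [h] at h2; exact h0 (by linarith)
    rw [eq_div_iff h3, h2]
  obtain ⟨d₀, e₀, x₀, hde₀, hx₀, hx₀'⟩ := htri.exists_crossing hgen ha hc hac hE
  obtain ⟨t₀, ht₀, ht₀', rfl⟩ := mem_openSegment_iff_lineMap.1 hx₀
  obtain ⟨⟨d, e⟩, hmem, hmin⟩ := ((G.V ×ˢ G.V).filter fun q : Pt × Pt => s(q.1, q.2) ∈ G.E ∧
      ∃ t : ℝ, 0 < t ∧ t < 1 ∧ a + t • (c - a) ∈ openSegment ℝ q.1 q.2).exists_min_image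
      (fun q => orient q.1 q.2 a / (orient q.1 q.2 a - orient q.1 q.2 c))
      ⟨(d₀, e₀), Finset.mem_filter.2 ⟨Finset.mem_product.2 ⟨left_mem hde₀, right_mem hde₀⟩, hde₀,
        t₀, ht₀, ht₀', hx₀'⟩⟩
  obtain ⟨-, hde, τ, hτ0, hτ1, hx⟩ := Finset.mem_filter.1 hmem
  have hmin' : ∀ f h t, s(f, h) ∈ G.E → 0 < t → t < τ → a + t • (c - a) ∉ openSegment ℝ f h := by
    intro f h t hfh ht0 ht1 hm
    have h1 := hmin (f, h) (Finset.mem_filter.2 ⟨Finset.mem_product.2 ⟨left_mem hfh, right_mem hfh⟩,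
      hfh, t, ht0, ht1.trans hτ1, hm⟩)
    simp only at h1
    rw [← hτ d e τ hde hτ0 hτ1 hx, ← hτ f h t hfh ht0 (ht1.trans hτ1) hm] at h1
    linarith
  have key : ∀ d e, s(d, e) ∈ G.E → a + τ • (c - a) ∈ openSegment ℝ d e → 0 < g (d - a) →
      ∃ p, s(a, p) ∈ G.E ∧ 0 < g (p - a) := by
    intro d e hde hx hgd
    obtain ⟨p, α, β, hap, hα, hβ, hp⟩ := htri.exists_adj_of_first_crossing hgen ha hc hac hE hde
      hτ0 hτ1 hx hmin'
    refine ⟨p, hap, ?_⟩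
    rw [hp, map_add, map_smul, map_smul, map_smul]
    simp only [smul_eq_mul]
    positivity
  by_cases hgd : 0 < g (d - a)
  · exact key d e hde hx hgd
  · refine key e d (edge_symm hde) (by rwa [openSegment_symm]) ?_
    obtain ⟨r, hr0, hr1, hr⟩ := mem_openSegment_iff_lineMap.1 hx
    have : τ • (c - a) = (1 - r) • (d - a) + r • (e - a) := by
      rw [← add_right_inj a, hr]; module
    have h1 := congrArg g this
    rw [map_add, map_smul, map_smul, map_smul] at h1
    simp only [smul_eq_mul] at h1
    have h2 : 0 < τ * g (c - a) := by positivity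
    have h3 : 0 < r * g (e - a) := by nlinarith
    exact (pos_iff_pos_of_mul_pos h3).1 hr0

/-- An edge through a point of a corner at `a` without neighbors of `a` inside cannot leave the
corner through the side `a c`. -/
theorem not_exits_through_side {a c d e y : Pt} (A B : Pt →ₗ[ℝ] ℝ)
    (hinj : ∀ z, A z = 0 → B z = 0 → z = 0) (hAc : A (c - a) = 0) (hBc : B (c - a) = 1)
    (hac : s(a, c) ∈ G.E) (hde : s(d, e) ∈ G.E) (hy : y ∈ openSegment ℝ d e)
    (hnbr : ∀ p, s(a, p) ∈ G.E → ¬(0 < A (p - a) ∧ 0 < B (p - a)))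
    (hAy : 0 < A (y - a)) (hBy : 0 < B (y - a)) (hSy : A (y - a) + B (y - a) ≤ 1)
    (hSd : A (d - a) + B (d - a) < 1) (hAd : A (d - a) ≤ 0)
    (hcr : 0 ≤ A (y - a) * B (d - a) - B (y - a) * A (d - a)) : False := by
  have hden : 0 < A (y - a) - A (d - a) := by linarith
  obtain ⟨l, hl⟩ : ∃ l, l = A (y - a) / (A (y - a) - A (d - a)) := ⟨_, rfl⟩
  have hle : l * (A (y - a) - A (d - a)) = A (y - a) := by rw [hl, div_mul_cancel₀ _ hden.ne']
  have hl0 : 0 < l := by rw [hl]; exact div_pos hAy hden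
  have hl1 : l ≤ 1 := by rw [hl, div_le_one hden]; linarith
  obtain ⟨r, hr0, hr1, hr⟩ := mem_openSegment_iff_lineMap.1 hy
  obtain ⟨w, hw⟩ : ∃ w, w = y + l • (d - y) := ⟨_, rfl⟩
  have hAw : A (w - a) = 0 := by rw [hw, apply_lineMap_sub]; linarith
  have hBw : B (w - a) = B (y - a) + l * (B (d - a) - B (y - a)) := by rw [hw, apply_lineMap_sub]
  have hBw0 : 0 ≤ B (w - a) := by
    have : B (w - a) * (A (y - a) - A (d - a)) =
        A (y - a) * B (d - a) - B (y - a) * A (d - a) := by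
      rw [hBw]; linear_combination (B (d - a) - B (y - a)) * hle
    exact nonneg_of_mul_nonneg_left (this ▸ hcr) hden
  have hBw1 : B (w - a) < 1 := by
    have h1 : A (w - a) + B (w - a) = (1 - l) * (A (y - a) + B (y - a)) +
        l * (A (d - a) + B (d - a)) := by
      rw [hw, apply_lineMap_sub, apply_lineMap_sub]; ring
    have h2 := mul_lt_mul_of_pos_left hSd hl0
    have h3 := mul_le_mul_of_nonneg_left hSy (sub_nonneg.2 hl1)
    linarith
  have hwde : l < 1 → w ∈ openSegment ℝ d e := by
    intro h
    refine mem_openSegment_iff_lineMap.2 ⟨(1 - l) * r, mul_pos (by linarith) hr0, ?_, ?_⟩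
    · have := mul_lt_mul_of_pos_left hr1 (sub_pos.2 h)
      linarith
    · rw [hw, hr]; module
  have hwd : l = 1 → w = d := by rintro rfl; rw [hw]; module
  rcases eq_or_lt_of_le hBw0 with h0 | h0
  · have hwa : w = a := sub_eq_zero.1 (hinj _ hAw h0.symm)
    rcases eq_or_lt_of_le hl1 with h | h
    · obtain rfl : d = a := (hwd h).symm.trans hwa
      refine hnbr e hde ?_
      rw [hr, apply_lineMap_sub] at hAy hBy
      simp only [sub_self, map_zero, sub_zero, zero_add] at hAy hBy
      exact ⟨(pos_iff_pos_of_mul_pos hAy).1 hr0, (pos_iff_pos_of_mul_pos hBy).1 hr0⟩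
    · exact notMem_openSegment hde (left_mem hac) (hwa ▸ hwde h)
  · have hwac : w ∈ openSegment ℝ a c := by
      refine mem_openSegment_iff_lineMap.2 ⟨B (w - a), h0, hBw1, ?_⟩
      rw [← sub_eq_zero]
      have : w - (a + B (w - a) • (c - a)) = (w - a) - B (w - a) • (c - a) := by abel
      rw [this]
      apply hinj
      · rw [map_sub, map_smul, hAc, hAw]; simp
      · rw [map_sub, map_smul, hBc]; simp
    rcases eq_or_lt_of_le hl1 with h | h
    · exact notMem_openSegment hac (left_mem hde) (hwd h ▸ hwac)
    · have hy0 : A (y - a) = A (d - a) + r * (A (e - a) - A (d - a)) := by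
        rw [hr, apply_lineMap_sub]
      have ha0 : A (a - a) = 0 := by simp
      rcases Sym2.eq_iff.1 (edge_eq_of_mem hde hac (hwde h) hwac) with ⟨rfl, rfl⟩ | ⟨rfl, rfl⟩
      · rw [hAc, ha0] at hy0; linarith
      · rw [hAc, ha0] at hy0; linarith

/-- The triple `a b c` is a counterclockwise empty triangle of the graph. -/
def IsFace (G : PSLG) (a b c : Pt) : Prop :=
  s(a, b) ∈ G.E ∧ s(b, c) ∈ G.E ∧ s(c, a) ∈ G.E ∧ 0 < orient a b c ∧
    ∀ x ∈ G.V, ¬(0 < orient a b x ∧ 0 < orient b c x ∧ 0 < orient c a x)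

theorem IsFace.rotate {a b c : Pt} (h : G.IsFace a b c) : G.IsFace b c a :=
  ⟨h.2.1, h.2.2.1, h.1, by rw [orient_rotate]; exact h.2.2.2.1,
    fun x hx hx' => h.2.2.2.2 x hx ⟨hx'.2.2, hx'.1, hx'.2.1⟩⟩

/-- Affine coordinates adapted to the triangle `a b c`. -/
theorem exists_triangle_coords {a b c : Pt} (h : 0 < orient a b c) :
    ∃ A B : Pt →ₗ[ℝ] ℝ, (∀ z, A z = 0 → B z = 0 → z = 0) ∧
      A (b - a) = 1 ∧ A (c - a) = 0 ∧ B (b - a) = 0 ∧ B (c - a) = 1 ∧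
      (∀ x, orient a b x = orient a b c * B (x - a)) ∧
      (∀ x, orient c a x = orient a b c * A (x - a)) ∧
      (∀ x, orient b c x = orient a b c * (1 - A (x - a) - B (x - a))) ∧
      (∀ x, orient a x c = orient a b c * A (x - a)) := by
  obtain ⟨A, B, hdec, hcross, h1, h2, h3, h4⟩ := exists_coords (show crossp (b - a) (c - a) ≠ 0
    from h.ne')
  refine ⟨A, B, fun z hA hB => ?_, h1, h2, h3, h4, fun x => ?_, fun x => ?_, fun x => ?_,
    fun x => ?_⟩
  · rw [hdec z, hA, hB]; simp
  · rw [orient, hcross, h1, h3, orient]; ring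
  · rw [← orient_rotate, orient, hcross, h2, h4, orient]; ring
  · have hx : ∀ L : Pt →ₗ[ℝ] ℝ, L (x - b) = L (x - a) - L (b - a) := fun L => by
      rw [← map_sub]; congr 1; abel
    have hc : ∀ L : Pt →ₗ[ℝ] ℝ, L (c - b) = L (c - a) - L (b - a) := fun L => by
      rw [← map_sub]; congr 1; abel
    rw [orient, hcross, hc, hc, hx, hx, h1, h2, h3, h4, orient]; ring
  · rw [orient, hcross, h2, h4, orient]; ring

/-- Two neighbors of `a` that are angularly consecutive span a face. -/
theorem IsTriangulation.isFace_of_consecutive (htri : G.IsTriangulation)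
    (hgen : NoThreeCollinear G.V) {a b c : Pt} (hab : s(a, b) ∈ G.E) (hac : s(a, c) ∈ G.E)
    (hpos : 0 < orient a b c)
    (hnbr : ∀ p, s(a, p) ∈ G.E → ¬(0 < orient a b p ∧ 0 < orient a p c)) : G.IsFace a b c := by
  obtain ⟨A, B, hinj, hAb, hAc, hBb, hBc, hB, hA, hS, hA'⟩ := exists_triangle_coords hpos
  have hnbr' : ∀ p, s(a, p) ∈ G.E → ¬(0 < A (p - a) ∧ 0 < B (p - a)) := by
    intro p hp h
    refine hnbr p hp ⟨?_, ?_⟩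
    · rw [hB]; exact mul_pos hpos h.2
    · rw [hA']; exact mul_pos hpos h.1
  have hinside : ∀ d e y, s(d, e) ∈ G.E → y ∈ openSegment ℝ d e → 0 < A (y - a) → 0 < B (y - a) →
      A (y - a) + B (y - a) ≤ 1 → A (d - a) + B (d - a) < 1 →
      0 < A (d - a) ∧ 0 < B (d - a) := by
    intro d e y hde hy hAy hBy hSy hSd
    have h1 := not_exits_through_side A B hinj hAc hBc hac hde hy hnbr' hAy hBy hSy hSd
    have h2 := not_exits_through_side B A (fun z h h' => hinj z h' h) hBb hAb hab hde hy
      (fun p hp h => hnbr' p hp h.symm) hBy hAy (by linarith) (by linarith)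
    by_contra hcon
    rcases le_or_gt 0 (A (y - a) * B (d - a) - B (y - a) * A (d - a)) with h | h
    · rcases le_or_gt (A (d - a)) 0 with h' | h'
      · exact h1 h' h
      · refine hcon ⟨h', ?_⟩
        have : 0 < A (y - a) * B (d - a) := by
          have := mul_pos hBy h'; linarith
        exact (pos_iff_pos_of_mul_pos this).1 hAy
    · rcases le_or_gt (B (d - a)) 0 with h' | h'
      · exact h2 h' (by linarith)
      · refine hcon ⟨?_, h'⟩
        have : 0 < B (y - a) * A (d - a) := by
          have := mul_pos hAy h'; linarith
        exact (pos_iff_pos_of_mul_pos this).1 hBy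
  have hempty : ∀ x ∈ G.V, ¬(0 < A (x - a) ∧ 0 < B (x - a) ∧ A (x - a) + B (x - a) < 1) := by
    intro x₀ hx₀ hx₀'
    obtain ⟨x, hx, hmin⟩ := (G.V.filter fun x => 0 < A (x - a) ∧ 0 < B (x - a) ∧
      A (x - a) + B (x - a) < 1).exists_min_image (fun x => A (x - a) + B (x - a))
      ⟨x₀, Finset.mem_filter.2 ⟨hx₀, hx₀'⟩⟩
    obtain ⟨hxV, hAx, hBx, hSx⟩ := Finset.mem_filter.1 hx
    have hax : a ≠ x := by rintro rfl; simp at hAx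
    have hE : s(a, x) ∉ G.E := fun h => hnbr' x h ⟨hAx, hBx⟩
    obtain ⟨d, e, y, hde, hy, hy'⟩ := htri.exists_crossing hgen (left_mem hab) hxV hax hE
    obtain ⟨r, hr0, hr1, hr⟩ := mem_openSegment_iff_lineMap.1 hy
    have hAy : A (y - a) = r * A (x - a) := by rw [hr, apply_lineMap_sub]; simp
    have hBy : B (y - a) = r * B (x - a) := by rw [hr, apply_lineMap_sub]; simp
    have hlt : A (y - a) + B (y - a) < A (x - a) + B (x - a) := by
      rw [hAy, hBy, ← mul_add]
      exact mul_lt_of_lt_one_left (by linarith) hr1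
    have key : ∀ d e, s(d, e) ∈ G.E → y ∈ openSegment ℝ d e →
        ¬(A (d - a) + B (d - a) ≤ A (y - a) + B (y - a)) := by
      intro d e hde hy' hle
      have h := hinside d e y hde hy' (by rw [hAy]; positivity) (by rw [hBy]; positivity)
        (by linarith) (by linarith)
      have := hmin d (Finset.mem_filter.2 ⟨left_mem hde, h.1, h.2, by linarith⟩)
      linarith
    have h1 := key d e hde hy'
    have h2 := key e d (edge_symm hde) (by rwa [openSegment_symm])
    obtain ⟨t, ht0, ht1, ht⟩ := mem_openSegment_iff_lineMap.1 hy'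
    have h3 : A (y - a) + B (y - a) = (1 - t) * (A (d - a) + B (d - a)) +
        t * (A (e - a) + B (e - a)) := by
      rw [ht, apply_lineMap_sub, apply_lineMap_sub]; ring
    have h4 := mul_lt_mul_of_pos_left (not_le.1 h1) (sub_pos.2 ht1)
    have h5 := mul_lt_mul_of_pos_left (not_le.1 h2) ht0
    linarith
  have hbc : b ≠ c := by rintro rfl; rw [orient_self_right] at hpos; exact hpos.false
  refine ⟨hab, ?_, edge_symm hac, hpos, fun x hx h => hempty x hx ?_⟩
  · by_contra hE
    obtain ⟨d, e, y, hde, hy, hy'⟩ := htri.exists_crossing hgen (right_mem hab) (right_mem hac)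
      hbc hE
    obtain ⟨r, hr0, hr1, hr⟩ := mem_openSegment_iff_lineMap.1 hy
    have hAy : A (y - a) = 1 - r := by rw [hr, apply_lineMap_sub, hAb, hAc]; ring
    have hBy : B (y - a) = r := by rw [hr, apply_lineMap_sub, hBb, hBc]; ring
    have key : ∀ d e, s(d, e) ∈ G.E → y ∈ openSegment ℝ d e →
        ¬(A (d - a) + B (d - a) < 1) := by
      intro d e hde hy' hlt
      have h := hinside d e y hde hy' (by linarith) (by linarith) (by linarith) hlt
      exact hempty d (left_mem hde) ⟨h.1, h.2, hlt⟩
    have hne : s(d, e) ≠ s(b, c) := fun h => hE (h ▸ hde)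
    have h0 : orient b c d ≠ 0 := orient_ne_zero_of_crossing hgen (left_mem hde) (right_mem hde)
      (right_mem hab) (right_mem hac) (ne_of_edge hde) hbc hne hy' hy
    rw [hS] at h0
    have h1 := key d e hde hy'
    have h2 := key e d (edge_symm hde) (by rwa [openSegment_symm])
    have h3 := right_ne_zero_of_mul h0
    obtain ⟨t, ht0, ht1, ht⟩ := mem_openSegment_iff_lineMap.1 hy'
    have h4 : A (y - a) + B (y - a) = (1 - t) * (A (d - a) + B (d - a)) +
        t * (A (e - a) + B (e - a)) := by
      rw [ht, apply_lineMap_sub, apply_lineMap_sub]; ring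
    have h5 : 1 < A (d - a) + B (d - a) :=
      lt_of_le_of_ne (not_lt.1 h1) fun h => h3 (by linarith)
    have h6 := mul_lt_mul_of_pos_left h5 (sub_pos.2 ht1)
    have h7 := mul_le_mul_of_nonneg_left (not_lt.1 h2) ht0.le
    linarith
  · rw [hB, hS, hA] at h
    have h1 := (pos_iff_pos_of_mul_pos h.2.1).1 hpos
    exact ⟨(pos_iff_pos_of_mul_pos h.2.2).1 hpos, (pos_iff_pos_of_mul_pos h.1).1 hpos,
      by linarith⟩

/-- No edge leaves a vertex of a face into the interior of the face. -/
theorem IsFace.not_adj_inside (hgen : NoThreeCollinear G.V) {a b c x : Pt} (h : G.IsFace a b c)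
    (hx : s(a, x) ∈ G.E) : ¬(0 < orient a b x ∧ 0 < orient a x c) := by
  obtain ⟨hab, hbc, hca, hpos, hempty⟩ := h
  obtain ⟨A, B, hinj, hAb, hAc, hBb, hBc, hB, hA, hS, hA'⟩ := exists_triangle_coords hpos
  rintro ⟨h1, h2⟩
  have hxB : 0 < B (x - a) := by rw [hB] at h1; exact (pos_iff_pos_of_mul_pos h1).1 hpos
  have hxA : 0 < A (x - a) := by rw [hA'] at h2; exact (pos_iff_pos_of_mul_pos h2).1 hpos
  rcases lt_trichotomy (A (x - a) + B (x - a)) 1 with hlt | heq | hgt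
  · refine hempty x (right_mem hx) ⟨h1, ?_, ?_⟩
    · rw [hS]; exact mul_pos hpos (by linarith)
    · rw [hA]; exact mul_pos hpos hxA
  · have h0 : orient b c x = 0 := by rw [hS, show 1 - A (x - a) - B (x - a) = 0 by linarith, mul_zero]
    rcases eq_or_eq_of_orient_eq_zero hgen (left_mem hbc) (right_mem hbc) (right_mem hx)
      (ne_of_edge hbc) h0 with rfl | rfl
    · exact hxB.ne' hBb
    · exact hxA.ne' hAc
  · have hS0 : 0 < A (x - a) + B (x - a) := by linarith
    obtain ⟨r, hr⟩ : ∃ r, r = (A (x - a) + B (x - a))⁻¹ := ⟨_, rfl⟩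
    have hr1 : r * (A (x - a) + B (x - a)) = 1 := by rw [hr]; exact inv_mul_cancel₀ hS0.ne'
    have hr0 : 0 < r := by rw [hr]; exact inv_pos.2 hS0
    have hrlt : r < 1 := by rw [hr]; exact inv_lt_one_of_one_lt₀ hgt
    have hm1 : a + r • (x - a) ∈ openSegment ℝ a x :=
      mem_openSegment_iff_lineMap.2 ⟨r, hr0, hrlt, rfl⟩
    have hm2 : a + r • (x - a) ∈ openSegment ℝ b c := by
      refine mem_openSegment_iff_lineMap.2 ⟨r * B (x - a), mul_pos hr0 hxB, ?_, ?_⟩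
      · have := mul_pos hr0 hxA; linarith
      · rw [← sub_eq_zero]
        have e : a + r • (x - a) - (b + (r * B (x - a)) • (c - b)) = r • (x - a) - (b - a) -
          (r * B (x - a)) • ((c - a) - (b - a)) := by module
        rw [e]
        apply hinj
        · rw [map_sub, map_sub, map_smul, map_smul, map_sub _ (c - a), hAb, hAc, smul_eq_mul,
            smul_eq_mul]
          linear_combination hr1
        · rw [map_sub, map_sub, map_smul, map_smul, map_sub _ (c - a), hBb, hBc, smul_eq_mul,
            smul_eq_mul]
          ring
    rcases Sym2.eq_iff.1 (edge_eq_of_mem hx hbc hm1 hm2) with ⟨h, -⟩ | ⟨h, -⟩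
    · exact ne_of_edge hab h
    · exact ne_of_edge hca h.symm

theorem IsFace.ne₁₂ {a b c : Pt} (h : G.IsFace a b c) : a ≠ b := ne_of_edge h.1

theorem IsFace.ne₂₃ {a b c : Pt} (h : G.IsFace a b c) : b ≠ c := ne_of_edge h.2.1

theorem IsFace.ne₃₁ {a b c : Pt} (h : G.IsFace a b c) : c ≠ a := ne_of_edge h.2.2.1

theorem IsFace.pos {a b c : Pt} (h : G.IsFace a b c) : 0 < orient a b c := h.2.2.2.1

theorem IsFace.mem {a b c : Pt} (h : G.IsFace a b c) : a ∈ G.V := left_mem h.1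

theorem IsFace.apex_unique (hgen : NoThreeCollinear G.V) {a b c d : Pt} (h : G.IsFace a b c)
    (h' : G.IsFace a b d) : c = d := by
  by_contra hne
  have h0 : orient a c d ≠ 0 := orient_ne_zero hgen h.mem h.rotate.rotate.mem h'.rotate.rotate.mem
    h.ne₃₁.symm h'.ne₃₁.symm hne
  rcases lt_or_gt_of_ne h0 with hlt | hgt
  · refine h.not_adj_inside hgen (edge_symm h'.2.2.1) ⟨h'.pos, ?_⟩
    have : orient a d c = -orient a c d := by simp only [orient, crossp]; ring
    linarith
  · exact h'.not_adj_inside hgen (edge_symm h.2.2.1) ⟨h.pos, hgt⟩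

/-- A finite nonempty set in an open half-plane has an angularly last element. -/
theorem exists_last (s : Finset Pt) (hs : s.Nonempty) (a w : Pt)
    (h : ∀ p ∈ s, 0 < dotp w (p - a)) : ∃ p ∈ s, ∀ q ∈ s, orient a p q ≤ 0 := by
  obtain ⟨p, hp, hmax⟩ := s.exists_max_image (fun p => crossp w (p - a) / dotp w (p - a)) hs
  refine ⟨p, hp, fun q hq => ?_⟩
  have h1 := hmax q hq
  rw [div_le_div_iff₀ (h q hq) (h p hp)] at h1
  have h2 : (w.1 ^ 2 + w.2 ^ 2) * orient a p q =
      dotp w (p - a) * crossp w (q - a) - dotp w (q - a) * crossp w (p - a) := by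
    simp only [orient, dotp, crossp]; ring
  have h3 : 0 < w.1 ^ 2 + w.2 ^ 2 := by
    by_contra hle
    have e1 : w.1 = 0 := by nlinarith [sq_nonneg w.1, sq_nonneg w.2]
    have e2 : w.2 = 0 := by nlinarith [sq_nonneg w.1, sq_nonneg w.2]
    have := h p hp
    simp [dotp, e1, e2] at this
  by_contra hgt
  have := mul_pos h3 (not_le.1 hgt)
  linarith

/-- A finite nonempty set in an open half-plane has an angularly first element. -/
theorem exists_first (s : Finset Pt) (hs : s.Nonempty) (a w : Pt)
    (h : ∀ p ∈ s, 0 < dotp w (p - a)) : ∃ p ∈ s, ∀ q ∈ s, 0 ≤ orient a p q := by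
  obtain ⟨p, hp, hmax⟩ := s.exists_min_image (fun p => crossp w (p - a) / dotp w (p - a)) hs
  refine ⟨p, hp, fun q hq => ?_⟩
  have h1 := hmax q hq
  rw [div_le_div_iff₀ (h p hp) (h q hq)] at h1
  have h2 : (w.1 ^ 2 + w.2 ^ 2) * orient a p q =
      dotp w (p - a) * crossp w (q - a) - dotp w (q - a) * crossp w (p - a) := by
    simp only [orient, dotp, crossp]; ring
  have h3 : 0 ≤ w.1 ^ 2 + w.2 ^ 2 := by positivity
  by_contra hgt
  have := mul_nonpos_of_nonneg_of_nonpos h3 (not_le.1 hgt).le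
  have h4 : (w.1 ^ 2 + w.2 ^ 2) * orient a p q = 0 := by linarith
  rcases mul_eq_zero.1 h4 with h5 | h5
  · have e1 : w.1 = 0 := by nlinarith [sq_nonneg w.1, sq_nonneg w.2]
    have e2 : w.2 = 0 := by nlinarith [sq_nonneg w.1, sq_nonneg w.2]
    have := h p hp
    simp [dotp, e1, e2] at this
  · exact hgt h5.ge

def dotLinear (w : Pt) : Pt →ₗ[ℝ] ℝ where
  toFun := dotp w
  map_add' x y := by simp only [dotp, Prod.fst_add, Prod.snd_add]; ring
  map_smul' t x := by
    simp only [dotp, Prod.smul_fst, Prod.smul_snd, smul_eq_mul, RingHom.id_apply]; ring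

theorem dotLinear_apply (w z : Pt) : dotLinear w z = dotp w z := rfl

/-- Every edge with a vertex on its left is a side of a face on its left. -/
theorem IsTriangulation.exists_isFace (htri : G.IsTriangulation) (hgen : NoThreeCollinear G.V)
    {a b c : Pt} (hab : s(a, b) ∈ G.E) (hc : c ∈ G.V) (hpos : 0 < orient a b c) :
    ∃ q, G.IsFace a b q := by
  classical
  have hw : ∀ x, orient a b x = dotp (-(b.2 - a.2), b.1 - a.1) (x - a) := by
    intro x; simp only [orient, crossp, dotp, Prod.fst_sub, Prod.snd_sub]; ring
  obtain ⟨p, hp, hp'⟩ := htri.exists_adj_pos hgen (left_mem hab) hc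
    (dotLinear (-(b.2 - a.2), b.1 - a.1)) (by rw [dotLinear_apply, ← hw]; exact hpos)
  rw [dotLinear_apply, ← hw] at hp'
  obtain ⟨q, hq, hmin⟩ := exists_first (G.V.filter fun x => s(a, x) ∈ G.E ∧ 0 < orient a b x)
    ⟨p, Finset.mem_filter.2 ⟨right_mem hp, hp, hp'⟩⟩ a (-(b.2 - a.2), b.1 - a.1)
    (fun x hx => by rw [← hw]; exact (Finset.mem_filter.1 hx).2.2)
  obtain ⟨-, haq, hq'⟩ := Finset.mem_filter.1 hq
  refine ⟨q, htri.isFace_of_consecutive hgen hab haq hq' fun x hx hx' => ?_⟩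
  have h1 := hmin x (Finset.mem_filter.2 ⟨right_mem hx, hx, hx'.1⟩)
  have h2 := hx'.2
  have h3 : orient a q x = - orient a x q := by
    simp only [orient, crossp]; ring
  linarith

end PSLG

open Classical in
/-- Indicator of the direction `d` lying in the half-open cone from `p` to `q` with apex `o`. -/
def coneIndicator (o d p q : Pt) : ℕ :=
  if 0 ≤ crossp (p - o) d ∧ crossp (q - o) d < 0 then 1 else 0

theorem coneIndicator_triangle {o d a b c : Pt} (hd : d ≠ 0) (hab : 0 < orient o a b)
    (hbc : 0 < orient o b c) (hca : 0 < orient o c a) :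
    coneIndicator o d a b + coneIndicator o d b c + coneIndicator o d c a = 1 := by
  have key : orient o b c * crossp (a - o) d + orient o c a * crossp (b - o) d +
      orient o a b * crossp (c - o) d = 0 := by
    simp only [orient, crossp]; ring
  have hneg : ¬(crossp (a - o) d < 0 ∧ crossp (b - o) d < 0 ∧ crossp (c - o) d < 0) := by
    rintro ⟨h1, h2, h3⟩
    have := mul_neg_of_pos_of_neg hbc h1
    have := mul_neg_of_pos_of_neg hca h2
    have := mul_neg_of_pos_of_neg hab h3
    linarith
  have hnonneg : ¬(0 ≤ crossp (a - o) d ∧ 0 ≤ crossp (b - o) d ∧ 0 ≤ crossp (c - o) d) := by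
    rintro ⟨h1, h2, h3⟩
    have e1 := mul_nonneg hbc.le h1
    have e2 := mul_nonneg hca.le h2
    have e3 := mul_nonneg hab.le h3
    have h4 : crossp (a - o) d = 0 :=
      (mul_eq_zero.1 (by linarith : orient o b c * crossp (a - o) d = 0)).resolve_left hbc.ne'
    have h5 : crossp (b - o) d = 0 :=
      (mul_eq_zero.1 (by linarith : orient o c a * crossp (b - o) d = 0)).resolve_left hca.ne'
    apply hd
    have h6 : orient o a b * d.1 = 0 := by
      have : orient o a b * d.1 = (b - o).1 * crossp (a - o) d - (a - o).1 * crossp (b - o) d := by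
        simp only [orient, crossp]; ring
      rw [this, h4, h5]; ring
    have h7 : orient o a b * d.2 = 0 := by
      have : orient o a b * d.2 = (b - o).2 * crossp (a - o) d - (a - o).2 * crossp (b - o) d := by
        simp only [orient, crossp]; ring
      rw [this, h4, h5]; ring
    exact Prod.ext ((mul_eq_zero.1 h6).resolve_left hab.ne')
      ((mul_eq_zero.1 h7).resolve_left hab.ne')
  simp only [coneIndicator]
  split_ifs <;> first | rfl | (exfalso; grind)

theorem coneIndicator_split {o d p x q : Pt} (hpq : 0 < orient o p q) (hpx : 0 < orient o p x)
    (hxq : 0 < orient o x q) :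
    coneIndicator o d p q = coneIndicator o d p x + coneIndicator o d x q := by
  have key : orient o x q * crossp (p - o) d + orient o p x * crossp (q - o) d =
      orient o p q * crossp (x - o) d := by
    simp only [orient, crossp]; ring
  have hneg : crossp (p - o) d < 0 → crossp (q - o) d < 0 → crossp (x - o) d < 0 := by
    intro h1 h2
    have := mul_neg_of_pos_of_neg hxq h1
    have := mul_neg_of_pos_of_neg hpx h2
    by_contra h3
    have := mul_nonneg hpq.le (not_lt.1 h3)
    linarith
  have hnonneg : 0 ≤ crossp (p - o) d → 0 ≤ crossp (q - o) d → 0 ≤ crossp (x - o) d := by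
    intro h1 h2
    have := mul_nonneg hxq.le h1
    have := mul_nonneg hpx.le h2
    by_contra h3
    have := mul_neg_of_pos_of_neg hpq (not_le.1 h3)
    linarith
  simp only [coneIndicator]
  split_ifs <;> first | rfl | (exfalso; grind)

theorem add_le_sum_map_of_mem {α : Type*} {l : List α} {f : α → ℕ} {x y : α} (hx : x ∈ l)
    (hy : y ∈ l) (hxy : x ≠ y) : f x + f y ≤ (l.map f).sum := by
  classical
  rw [((List.perm_cons_erase hx).map f).sum_eq, List.map_cons, List.sum_cons]
  exact Nat.add_le_add_left (List.single_le_sum (by simp) _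
    (List.mem_map_of_mem ((List.mem_erase_of_ne hxy.symm).2 hy))) _

theorem exists_cyclePairs_fst {L : List Pt} {p : Pt} (hp : p ∈ L) :
    ∃ q ∈ cyclePairs L, q.1 = p := by
  have : (cyclePairs L).map Prod.fst = L := List.map_fst_zip (by simp)
  rw [← this] at hp
  obtain ⟨q, hq, rfl⟩ := List.mem_map.1 hp
  exact ⟨q, hq, rfl⟩

/-- A cycle winding exactly once counterclockwise around `o` is met exactly once by every ray
emanating from `o`. -/
theorem existsUnique_mem_cycleBody {L : List Pt} {o : Pt}
    (hpos : ∀ p ∈ cyclePairs L, 0 < orient o p.1 p.2)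
    (hsum : ∀ d : Pt, d ≠ 0 → ((cyclePairs L).map fun p => coneIndicator o d p.1 p.2).sum = 1)
    {d : Pt} (hd : d ≠ 0) :
    ∃! p : Pt, p ∈ cycleBody L ∧ ∃ t : ℝ, 0 ≤ t ∧ p = o + t • d := by
  have hcone : ∀ p ∈ cyclePairs L, coneIndicator o d p.1 p.2 ≠ 0 →
      0 ≤ crossp (p.1 - o) d ∧ crossp (p.2 - o) d < 0 := by
    intro p _ h
    by_contra hcon
    exact h (if_neg hcon)
  have hbody : ∀ y t, 0 ≤ t → y = o + t • d → y ∈ cycleBody L →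
      ∃ p ∈ cyclePairs L, coneIndicator o d p.1 p.2 = 1 ∧
        t * (crossp (p.1 - o) d - crossp (p.2 - o) d) = orient o p.1 p.2 := by
    intro y t ht hy hyb
    have hhalf : ∃ p ∈ cyclePairs L, ∃ s : ℝ, 0 ≤ s ∧ s < 1 ∧ y = p.1 + s • (p.2 - p.1) := by
      simp only [cycleBody, Set.mem_iUnion] at hyb
      obtain ⟨p, hp, hyp⟩ := hyb
      rw [segment_eq_image'] at hyp
      obtain ⟨s, ⟨h0, h1⟩, rfl⟩ := hyp
      rcases eq_or_lt_of_le h1 with rfl | h1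
      · have hp2 : p.2 ∈ L := by
          have := (List.of_mem_zip (show (p.1, p.2) ∈ L.zip (L.rotate 1) from hp)).2
          simpa using this
        obtain ⟨q, hq, hqp⟩ := exists_cyclePairs_fst hp2
        exact ⟨q, hq, 0, le_rfl, one_pos, by rw [hqp]; module⟩
      · exact ⟨p, hp, s, h0, h1, rfl⟩
    obtain ⟨p, hp, s, h0, h1, hs⟩ := hhalf
    have htd : t • d = (p.1 - o) + s • (p.2 - p.1) := by
      rw [← add_sub_right_comm, ← hs, hy]; abel
    have e1 := congrArg Prod.fst htd
    have e2 := congrArg Prod.snd htd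
    simp only [Prod.smul_fst, Prod.smul_snd, Prod.fst_add, Prod.snd_add, Prod.fst_sub,
      Prod.snd_sub, smul_eq_mul] at e1 e2
    have c1 : t * crossp (p.1 - o) d = s * orient o p.1 p.2 := by
      simp only [orient, crossp, Prod.fst_sub, Prod.snd_sub]
      linear_combination (p.1.1 - o.1) * e2 - (p.1.2 - o.2) * e1
    have c2 : t * crossp (p.2 - o) d = -((1 - s) * orient o p.1 p.2) := by
      simp only [orient, crossp, Prod.fst_sub, Prod.snd_sub]
      linear_combination (p.2.1 - o.1) * e2 - (p.2.2 - o.2) * e1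
    have hp0 := hpos p hp
    have c3 : t * crossp (p.2 - o) d < 0 := by
      rw [c2, neg_lt_zero]; exact mul_pos (by linarith) hp0
    have ht0 : 0 < t := lt_of_le_of_ne ht fun h => by rw [← h, zero_mul] at c3; exact c3.false
    refine ⟨p, hp, if_pos ⟨?_, ?_⟩, by rw [mul_sub, c1, c2]; ring⟩
    · refine nonneg_of_mul_nonneg_right (?_ : 0 ≤ t * crossp (p.1 - o) d) ht0
      rw [c1]; exact mul_nonneg h0 hp0.le
    · by_contra h
      exact absurd (mul_nonneg ht0.le (not_lt.1 h)) (not_le.2 c3)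
  obtain ⟨p, hp, hp1⟩ : ∃ p ∈ cyclePairs L, coneIndicator o d p.1 p.2 ≠ 0 := by
    by_contra! h
    have := hsum d hd
    rw [List.sum_eq_zero] at this
    · exact zero_ne_one this
    · intro x hx
      obtain ⟨p, hp, rfl⟩ := List.mem_map.1 hx
      exact h p hp
  obtain ⟨h1, h2⟩ := hcone p hp hp1
  have h3 : 0 < crossp (p.1 - o) d - crossp (p.2 - o) d := by linarith
  obtain ⟨D, hD⟩ : ∃ D, D = crossp (p.1 - o) d - crossp (p.2 - o) d := ⟨_, rfl⟩
  refine ⟨o + (orient o p.1 p.2 / D) • d, ⟨?_, _, ?_, rfl⟩, ?_⟩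
  · simp only [cycleBody, Set.mem_iUnion]
    refine ⟨p, hp, ?_⟩
    rw [segment_eq_image']
    refine ⟨crossp (p.1 - o) d / D, ⟨by rw [hD]; positivity, ?_⟩, ?_⟩
    · rw [hD, div_le_one h3]; linarith
    · rw [← hD] at h3
      ext
      · simp only [Prod.fst_add, Prod.smul_fst, smul_eq_mul, Prod.fst_sub]
        field_simp
        rw [hD]
        simp only [orient, crossp, Prod.fst_sub, Prod.snd_sub]
        ring
      · simp only [Prod.snd_add, Prod.smul_snd, smul_eq_mul, Prod.snd_sub]
        field_simp
        rw [hD]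
        simp only [orient, crossp, Prod.fst_sub, Prod.snd_sub]
        ring
  · rw [hD]; exact div_nonneg (hpos p hp).le h3.le
  · rintro y ⟨hyb, t, ht, hy⟩
    obtain ⟨q, hq, hq1, hqt⟩ := hbody y t ht hy hyb
    obtain rfl : q = p := by
      by_contra hne
      have := add_le_sum_map_of_mem (f := fun p => coneIndicator o d p.1 p.2) hq hp hne
      have := hsum d hd
      omega
    rw [hy, ← hqt, hD, mul_div_assoc, div_self h3.ne', mul_one]

theorem cyclePairs_three (a b c : Pt) : cyclePairs [a, b, c] = [(a, b), (b, c), (c, a)] := rfl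

theorem cyclePairs_four (a b c d : Pt) :
    cyclePairs [a, b, c, d] = [(a, b), (b, c), (c, d), (d, a)] := rfl

theorem cyclePairs_five (a b c d e : Pt) :
    cyclePairs [a, b, c, d, e] = [(a, b), (b, c), (c, d), (d, e), (e, a)] := rfl

theorem orient_convexComb_left (a b x y : Pt) (δ : ℝ) :
    orient ((1 - δ) • a + δ • b) x y = (1 - δ) * orient a x y + δ * orient b x y := by
  simp only [orient, crossp, Prod.fst_add, Prod.snd_add, Prod.fst_sub, Prod.snd_sub,
    Prod.smul_fst, Prod.smul_snd, smul_eq_mul]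
  ring

/-- The orientation stays positive when the apex moves slightly from `a` towards `b`. -/
theorem eventually_orient_pos {a b x y : Pt} (h : 0 ≤ orient a x y)
    (h' : orient a x y = 0 → 0 < orient b x y) :
    ∀ᶠ δ : ℝ in 𝓝[>] 0, 0 < orient ((1 - δ) • a + δ • b) x y := by
  rcases eq_or_lt_of_le h with h0 | h0
  · filter_upwards [self_mem_nhdsWithin] with δ hδ
    rw [orient_convexComb_left, ← h0, mul_zero, zero_add]
    exact mul_pos hδ (h' h0.symm)
  · have : ContinuousAt (fun δ : ℝ => orient ((1 - δ) • a + δ • b) x y) 0 := by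
      simp only [orient_convexComb_left]
      fun_prop
    refine (this.eventually_const_lt ?_).filter_mono nhdsWithin_le_nhds
    simpa [orient_convexComb_left] using h0

namespace PSLG

variable {G : PSLG}

theorem IsFace.isStarShapedPolygon {a b c : Pt} (h : G.IsFace a b c) :
    IsStarShapedPolygon G [a, b, c] := by
  obtain ⟨o, ho⟩ : ∃ o : Pt, o = (1 / 3 : ℝ) • (a + b + c) := ⟨_, rfl⟩
  have key : orient o a b = orient a b c / 3 ∧ orient o b c = orient a b c / 3 ∧
      orient o c a = orient a b c / 3 := by
    simp only [ho, orient, crossp, Prod.fst_add, Prod.snd_add, Prod.fst_sub, Prod.snd_sub,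
      Prod.smul_fst, Prod.smul_snd, smul_eq_mul]
    refine ⟨by ring, by ring, by ring⟩
  have hpos := h.pos
  have h1 : 0 < orient o a b := by rw [key.1]; positivity
  have h2 : 0 < orient o b c := by rw [key.2.1]; positivity
  have h3 : 0 < orient o c a := by rw [key.2.2]; positivity
  refine ⟨⟨by simp, ?_, ?_⟩, o, fun d hd => existsUnique_mem_cycleBody ?_ (fun d hd => ?_) hd⟩
  · simp [h.ne₁₂, h.ne₂₃, h.ne₃₁.symm]
  · simp [cyclePairs_three, h.1, h.2.1, h.2.2.1]
  · simp [cyclePairs_three, h1, h2, h3]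
  · have := coneIndicator_triangle hd h1 h2 h3
    simp only [cyclePairs_three, List.map_cons, List.map_nil, List.sum_cons, List.sum_nil]
    omega

/-- Two faces sharing an edge have different apices. -/
theorem IsFace.ne_opposite {a b c d : Pt} (h : G.IsFace a b c) (h' : G.IsFace b a d) : c ≠ d := by
  rintro rfl
  have h1 := h.pos
  have h2 := h'.pos
  rw [orient_swap] at h2
  linarith

theorem IsFace.isStarShapedPolygon_quad {a b c d : Pt} (h : G.IsFace a b c)
    (h' : G.IsFace b a d) : IsStarShapedPolygon G [a, d, b, c] := by
  obtain ⟨m, hm⟩ : ∃ m : Pt, m = (1 / 2 : ℝ) • (a + b) := ⟨_, rfl⟩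
  have key : orient m a b = 0 ∧ orient m b c = orient a b c / 2 ∧
      orient m c a = orient a b c / 2 ∧ orient m a d = orient b a d / 2 ∧
      orient m d b = orient b a d / 2 := by
    simp only [hm, orient, crossp, Prod.fst_add, Prod.snd_add, Prod.fst_sub, Prod.snd_sub,
      Prod.smul_fst, Prod.smul_snd, smul_eq_mul]
    refine ⟨by ring, by ring, by ring, by ring, by ring⟩
  have hpos := h.pos
  have hpos' := h'.pos
  have hcab : 0 < orient c a b := by rw [← orient_rotate]; exact hpos
  obtain ⟨δ, h1, h2, h3, h4, h5⟩ := ((eventually_orient_pos (a := m) (b := c) (x := a) (y := b)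
    key.1.ge fun _ => hcab).and <|
    (eventually_orient_pos (a := m) (b := c) (x := b) (y := c) (by rw [key.2.1]; positivity)
      fun h => absurd h (by rw [key.2.1]; positivity)).and <|
    (eventually_orient_pos (a := m) (b := c) (x := c) (y := a) (by rw [key.2.2.1]; positivity)
      fun h => absurd h (by rw [key.2.2.1]; positivity)).and <|
    (eventually_orient_pos (a := m) (b := c) (x := a) (y := d) (by rw [key.2.2.2.1]; positivity)
      fun h => absurd h (by rw [key.2.2.2.1]; positivity)).and <|
    (eventually_orient_pos (a := m) (b := c) (x := d) (y := b) (by rw [key.2.2.2.2]; positivity)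
      fun h => absurd h (by rw [key.2.2.2.2]; positivity))).exists
  refine ⟨⟨by simp, ?_, ?_⟩, (1 - δ) • m + δ • c,
    fun d hd => existsUnique_mem_cycleBody ?_ (fun d hd => ?_) hd⟩
  · simp [h.ne₁₂, h.ne₂₃, h.ne₃₁.symm, h'.ne₂₃, h'.ne₃₁, (h.ne_opposite h').symm]
  · simp [cyclePairs_four, h'.2.1, h'.2.2.1, h.2.1, h.2.2.1]
  · simp [cyclePairs_four, h2, h3, h4, h5]
  · have e1 := coneIndicator_triangle hd h1 h2 h3
    have e2 := coneIndicator_split (d := d) h1 h4 h5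
    simp only [cyclePairs_four, List.map_cons, List.map_nil, List.sum_cons, List.sum_nil]
    omega

/-- Consecutive faces around `a` have different outer vertices. -/
theorem IsFace.ne_consecutive {a e b c : Pt} (h : G.IsFace a e b) (h' : G.IsFace a b c) :
    e ≠ c := by
  rintro rfl
  have h1 := h.pos
  have h2 := h'.pos
  have : orient a b e = -orient a e b := by simp only [orient, crossp]; ring
  linarith

/-- Three consecutive faces at `a` admit a direction in the middle face seeing both outer
sides. -/
theorem exists_pentagon_direction (hgen : NoThreeCollinear G.V) {a e b c d : Pt}
    (h₁ : G.IsFace a e b) (h₂ : G.IsFace a b c) (h₃ : G.IsFace a c d) (hed : e ≠ d) :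
    ∃ w : Pt, 0 < orient a b w ∧ 0 < orient a w c ∧ 0 < orient a e w ∧ 0 < orient a w d := by
  have hB := h₂.pos
  have hp := h₁.pos
  have hz := h₃.pos
  have comb : ∀ s t : ℝ, 0 < s → 0 < t → 0 < s * orient a e b + t * orient a e c →
      0 < s * orient a b d + t * orient a c d →
      ∃ w : Pt, 0 < orient a b w ∧ 0 < orient a w c ∧ 0 < orient a e w ∧ 0 < orient a w d := by
    intro s t hs ht h1 h2
    have e1 : orient a b (a + (s • (b - a) + t • (c - a))) = t * orient a b c := by
      simp only [orient, crossp, Prod.fst_add, Prod.snd_add, Prod.fst_sub, Prod.snd_sub,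
        Prod.smul_fst, Prod.smul_snd, smul_eq_mul]
      ring
    have e2 : orient a (a + (s • (b - a) + t • (c - a))) c = s * orient a b c := by
      simp only [orient, crossp, Prod.fst_add, Prod.snd_add, Prod.fst_sub, Prod.snd_sub,
        Prod.smul_fst, Prod.smul_snd, smul_eq_mul]
      ring
    have e3 : orient a e (a + (s • (b - a) + t • (c - a))) =
        s * orient a e b + t * orient a e c := by
      simp only [orient, crossp, Prod.fst_add, Prod.snd_add, Prod.fst_sub, Prod.snd_sub,
        Prod.smul_fst, Prod.smul_snd, smul_eq_mul]
      ring
    have e4 : orient a (a + (s • (b - a) + t • (c - a))) d =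
        s * orient a b d + t * orient a c d := by
      simp only [orient, crossp, Prod.fst_add, Prod.snd_add, Prod.fst_sub, Prod.snd_sub,
        Prod.smul_fst, Prod.smul_snd, smul_eq_mul]
      ring
    exact ⟨_, e1 ▸ mul_pos ht hB, e2 ▸ mul_pos hs hB, e3 ▸ h1, e4 ▸ h2⟩
  rcases le_or_gt 0 (orient a e c) with hq | hq
  · refine comb (orient a c d) (|orient a b d| + 1) hz (by positivity) (by positivity) ?_
    have := mul_le_mul_of_nonneg_left (neg_abs_le (orient a b d)) hz.le
    linarith
  rcases le_or_gt 0 (orient a b d) with hr | hr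
  · refine comb (|orient a e c| + 1) (orient a e b) (by positivity) hp ?_ (by positivity)
    have := mul_le_mul_of_nonneg_left (neg_abs_le (orient a e c)) hp.le
    linarith
  have hED : orient a e d < 0 := by
    by_contra hcon
    rcases eq_or_lt_of_le (not_lt.1 hcon) with h0 | h0
    · rcases eq_or_eq_of_orient_eq_zero hgen h₁.mem h₁.rotate.mem h₃.rotate.rotate.mem h₁.ne₁₂
        h0.symm with h | h
      · exact h₃.ne₃₁ h
      · exact hed h.symm
    · refine h₁.not_adj_inside hgen (edge_symm h₃.2.2.1) ⟨h0, ?_⟩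
      have : orient a d b = -orient a b d := by simp only [orient, crossp]; ring
      linarith
  have plucker : orient a e b * orient a c d - orient a e c * orient a b d =
      -(orient a e d * orient a b c) := by
    simp only [orient, crossp]; ring
  have hneg := mul_neg_of_neg_of_pos hED hB
  refine comb (orient a c d - orient a e c) (orient a e b - orient a b d) (by linarith)
    (by linarith) (by linarith) (by linarith)

theorem IsFace.isStarShapedPolygon_pentagon (hgen : NoThreeCollinear G.V) {a e b c d : Pt}
    (h₁ : G.IsFace a e b) (h₂ : G.IsFace a b c) (h₃ : G.IsFace a c d) (hed : e ≠ d) :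
    IsStarShapedPolygon G [a, e, b, c, d] := by
  obtain ⟨w, hbw, hwc, hew, hwd⟩ := exists_pentagon_direction hgen h₁ h₂ h₃ hed
  have hp := h₁.pos
  have hB := h₂.pos
  have hz := h₃.pos
  have hl : ∀ x, orient a a x = 0 := fun x => by simp [orient, crossp]
  obtain ⟨δ, k1, k2, k3, k4, k5, k6, k7⟩ :=
    ((eventually_orient_pos (a := a) (b := w) (x := a) (y := b) (hl b).ge
      fun _ => by rw [← orient_rotate]; exact hbw).and <|
    (eventually_orient_pos (a := a) (b := w) (x := b) (y := c) hB.le fun h => absurd h hB.ne').and <|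
    (eventually_orient_pos (a := a) (b := w) (x := c) (y := a) (orient_self_left a c).ge
      fun _ => by rw [orient_rotate]; exact hwc).and <|
    (eventually_orient_pos (a := a) (b := w) (x := a) (y := e) (hl e).ge
      fun _ => by rw [← orient_rotate]; exact hew).and <|
    (eventually_orient_pos (a := a) (b := w) (x := e) (y := b) hp.le fun h => absurd h hp.ne').and <|
    (eventually_orient_pos (a := a) (b := w) (x := c) (y := d) hz.le fun h => absurd h hz.ne').and <|
    (eventually_orient_pos (a := a) (b := w) (x := d) (y := a) (orient_self_left a d).ge
      fun _ => by rw [orient_rotate]; exact hwd)).exists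
  refine ⟨⟨by simp, ?_, ?_⟩, (1 - δ) • a + δ • w,
    fun d hd => existsUnique_mem_cycleBody ?_ (fun d hd => ?_) hd⟩
  · simp [h₁.ne₁₂, h₁.ne₂₃, h₁.ne₃₁.symm, h₂.ne₂₃, h₂.ne₃₁.symm, h₃.ne₂₃, h₃.ne₃₁.symm, hed,
      h₁.ne_consecutive h₂, h₂.ne_consecutive h₃]
  · simp [cyclePairs_five, h₁.1, h₁.2.1, h₂.2.1, h₃.2.1, h₃.2.2.1]
  · simp [cyclePairs_five, k2, k4, k5, k6, k7]
  · have e1 := coneIndicator_triangle hd k1 k2 k3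
    have e2 := coneIndicator_split (d := d) k1 k4 k5
    have e3 := coneIndicator_split (d := d) k3 k6 k7
    simp only [cyclePairs_five, List.map_cons, List.map_nil, List.sum_cons, List.sum_nil]
    omega

end PSLG

theorem dotp_sub (w x y : Pt) : dotp w (x - y) = dotp w x - dotp w y := by
  simp only [dotp, Prod.fst_sub, Prod.snd_sub]; ring

/-- Some linear functional separates the points of a finite set. -/
theorem exists_injOn_dotp (V : Finset Pt) : ∃ w : Pt, Set.InjOn (dotp w) V := by
  classical
  obtain ⟨t, ht⟩ := ((V ×ˢ V).image fun p : Pt × Pt =>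
    -(p.1.1 - p.2.1) / (p.1.2 - p.2.2)).exists_notMem
  refine ⟨(1, t), fun x hx y hy hxy => ?_⟩
  simp only [dotp, one_mul] at hxy
  by_cases h : x.2 = y.2
  · refine Prod.ext ?_ h
    rw [h] at hxy; linarith
  · refine absurd (Finset.mem_image.2 ⟨(x, y), Finset.mem_product.2 ⟨hx, hy⟩, ?_⟩) ht
    rw [div_eq_iff (sub_ne_zero.2 h)]
    linarith

/-- A maximizer of a nonzero linear functional is not interior to the convex hull. -/
theorem notMem_interior_convexHull {S : Set Pt} {v z : Pt} (g : Pt →ₗ[ℝ] ℝ) (hz : 0 < g z)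
    (h : ∀ x ∈ S, g x ≤ g v) : v ∉ interior (convexHull ℝ S) := by
  intro hv
  have hsub : convexHull ℝ S ⊆ {x | g x ≤ g v} :=
    convexHull_min h (convex_halfSpace_le g.isLinear _)
  have hcont : ContinuousAt (fun t : ℝ => v + t • z) 0 := by fun_prop
  have hev : ∀ᶠ t : ℝ in 𝓝[>] 0, v + t • z ∈ convexHull ℝ S :=
    (hcont.eventually (by simpa using mem_interior_iff_mem_nhds.1 hv)).filter_mono
      nhdsWithin_le_nhds
  obtain ⟨t, ht, ht0⟩ := (hev.and self_mem_nhdsWithin).exists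
  have h1 : g (v + t • z) ≤ g v := hsub ht
  rw [map_add, map_smul, smul_eq_mul] at h1
  have := mul_pos (show 0 < t from ht0) hz
  linarith

theorem notMem_interior_of_orient_nonneg {S : Set Pt} {a b : Pt} (hab : a ≠ b)
    (h : ∀ x ∈ S, 0 ≤ orient a b x) : a ∉ interior (convexHull ℝ S) := by
  have hw : ∀ x, orient a b x = -(dotp (b.2 - a.2, -(b.1 - a.1)) x -
      dotp (b.2 - a.2, -(b.1 - a.1)) a) := by
    intro x; simp only [orient, crossp, dotp, Prod.fst_sub, Prod.snd_sub]; ring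
  refine notMem_interior_convexHull (z := (b.2 - a.2, -(b.1 - a.1)))
    (PSLG.dotLinear (b.2 - a.2, -(b.1 - a.1))) ?_ fun x hx => ?_
  · rw [PSLG.dotLinear_apply]
    by_contra hle
    simp only [dotp] at hle
    refine hab (Prod.ext ?_ ?_)
    · nlinarith [sq_nonneg (b.1 - a.1), sq_nonneg (b.2 - a.2)]
    · nlinarith [sq_nonneg (b.1 - a.1), sq_nonneg (b.2 - a.2)]
  · rw [PSLG.dotLinear_apply, PSLG.dotLinear_apply]
    have := h x hx
    rw [hw] at this
    linarith

theorem notMem_interior_of_orient_nonpos {S : Set Pt} {a b : Pt} (hab : a ≠ b)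
    (h : ∀ x ∈ S, orient a b x ≤ 0) : a ∉ interior (convexHull ℝ S) := by
  refine notMem_interior_of_orient_nonneg (b := a - (b - a)) (fun h' => hab ?_) fun x hx => ?_
  · have : b - a = 0 := by rw [eq_comm, sub_eq_self] at h'; exact h'
    exact (sub_eq_zero.1 this).symm
  · have : orient a (a - (b - a)) x = -orient a b x := by
      simp only [orient, crossp, Prod.fst_sub, Prod.snd_sub]; ring
    have := h x hx
    linarith

theorem mem_interior_convexHull_of_orient_pos {S : Set Pt} {a b c x : Pt} (ha : a ∈ S)
    (hb : b ∈ S) (hc : c ∈ S) (h1 : 0 < orient a b x) (h2 : 0 < orient b c x)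
    (h3 : 0 < orient c a x) : x ∈ interior (convexHull ℝ S) := by
  have hopen : IsOpen {y : Pt | 0 < orient a b y ∧ 0 < orient b c y ∧ 0 < orient c a y} := by
    have hc : ∀ p q : Pt, Continuous fun y : Pt => orient p q y := by
      intro p q; unfold orient crossp; fun_prop
    exact (isOpen_lt continuous_const (hc a b)).inter
      ((isOpen_lt continuous_const (hc b c)).inter (isOpen_lt continuous_const (hc c a)))
  refine mem_interior.2 ⟨_, fun y hy => ?_, hopen, ⟨h1, h2, h3⟩⟩
  obtain ⟨k1, k2, k3⟩ := hy
  obtain ⟨D, hD⟩ : ∃ D, D = orient a b y + orient b c y + orient c a y := ⟨_, rfl⟩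
  have hD0 : 0 < D := by linarith
  have hsum : orient b c y / D + orient c a y / D + orient a b y / D = 1 := by
    rw [← add_div, ← add_div, div_eq_one_iff_eq hD0.ne', hD]; ring
  have hy : (orient b c y / D) • a + (orient c a y / D) • b + (orient a b y / D) • c = y := by
    ext
    · simp only [Prod.fst_add, Prod.smul_fst, smul_eq_mul]
      field_simp
      rw [hD]
      simp only [orient, crossp, Prod.fst_sub, Prod.snd_sub]; ring
    · simp only [Prod.snd_add, Prod.smul_snd, smul_eq_mul]
      field_simp
      rw [hD]
      simp only [orient, crossp, Prod.fst_sub, Prod.snd_sub]; ring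
  have hconv := convex_convexHull ℝ S
  have := hconv.sum_mem (t := Finset.univ)
    (w := ![orient b c y / D, orient c a y / D, orient a b y / D]) (z := ![a, b, c]) ?_ ?_ ?_
  · simpa [Fin.sum_univ_three, hy] using this
  · intro i _
    fin_cases i <;> simp <;> positivity
  · simpa [Fin.sum_univ_three] using hsum
  · intro i _
    fin_cases i
    · exact subset_convexHull ℝ S ha
    · exact subset_convexHull ℝ S hb
    · exact subset_convexHull ℝ S hc

namespace PSLG

variable {G : PSLG}

theorem IsTriangulation.exists_upper_face (htri : G.IsTriangulation) (hgen : NoThreeCollinear G.V)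
    {w v x : Pt} (hw : Set.InjOn (dotp w) G.V) (hv : v ∈ G.V) (hx : x ∈ G.V)
    (hvx : dotp w v < dotp w x) :
    (∃ p q, G.IsFace v p q ∧ dotp w q < dotp w v ∧ dotp w v < dotp w p) ∨
      ∃ p ∈ G.V, dotp w v < dotp w p ∧ ∀ c ∈ G.V, orient v p c ≤ 0 := by
  classical
  obtain ⟨r, hr, hr'⟩ := htri.exists_adj_pos hgen hv hx (dotLinear w)
    (by rw [dotLinear_apply, dotp_sub]; linarith)
  rw [dotLinear_apply, dotp_sub] at hr'
  obtain ⟨p, hp, hlast⟩ := exists_last (G.V.filter fun y => s(v, y) ∈ G.E ∧ dotp w v < dotp w y)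
    ⟨r, Finset.mem_filter.2 ⟨right_mem hr, hr, by linarith⟩⟩ v w
    (fun y hy => by rw [dotp_sub]; linarith [(Finset.mem_filter.1 hy).2.2])
  obtain ⟨hpV, hvp, hpl⟩ := Finset.mem_filter.1 hp
  by_cases h : ∃ c ∈ G.V, 0 < orient v p c
  · obtain ⟨c, hc, hpos⟩ := h
    obtain ⟨q, hq⟩ := htri.exists_isFace hgen hvp hc hpos
    refine Or.inl ⟨p, q, hq, ?_, hpl⟩
    by_contra hle
    rcases eq_or_lt_of_le (not_lt.1 hle) with h | h
    · exact hq.ne₃₁ (hw hq.rotate.rotate.mem hv h.symm)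
    · have := hlast q (Finset.mem_filter.2 ⟨hq.rotate.rotate.mem, edge_symm hq.2.2.1, h⟩)
      linarith [hq.pos]
  · push Not at h
    exact Or.inr ⟨p, hpV, hpl, h⟩

theorem IsTriangulation.exists_lower_face (htri : G.IsTriangulation) (hgen : NoThreeCollinear G.V)
    {w v x : Pt} (hw : Set.InjOn (dotp w) G.V) (hv : v ∈ G.V) (hx : x ∈ G.V)
    (hvx : dotp w v < dotp w x) :
    (∃ q p, G.IsFace v q p ∧ dotp w q < dotp w v ∧ dotp w v < dotp w p) ∨
      ∃ p ∈ G.V, dotp w v < dotp w p ∧ ∀ c ∈ G.V, 0 ≤ orient v p c := by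
  classical
  obtain ⟨r, hr, hr'⟩ := htri.exists_adj_pos hgen hv hx (dotLinear w)
    (by rw [dotLinear_apply, dotp_sub]; linarith)
  rw [dotLinear_apply, dotp_sub] at hr'
  obtain ⟨p, hp, hfirst⟩ := exists_first (G.V.filter fun y => s(v, y) ∈ G.E ∧ dotp w v < dotp w y)
    ⟨r, Finset.mem_filter.2 ⟨right_mem hr, hr, by linarith⟩⟩ v w
    (fun y hy => by rw [dotp_sub]; linarith [(Finset.mem_filter.1 hy).2.2])
  obtain ⟨hpV, hvp, hpl⟩ := Finset.mem_filter.1 hp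
  by_cases h : ∃ c ∈ G.V, 0 < orient p v c
  · obtain ⟨c, hc, hpos⟩ := h
    obtain ⟨q, hq⟩ := htri.exists_isFace hgen (edge_symm hvp) hc hpos
    refine Or.inl ⟨q, p, hq.rotate, ?_, hpl⟩
    by_contra hle
    rcases eq_or_lt_of_le (not_lt.1 hle) with h | h
    · exact hq.ne₂₃ (hw hv hq.rotate.rotate.mem h)
    · have := hfirst q (Finset.mem_filter.2 ⟨hq.rotate.rotate.mem, hq.2.1, h⟩)
      have h1 := hq.pos
      rw [orient_swap] at h1
      linarith
  · push Not at h
    refine Or.inr ⟨p, hpV, hpl, fun c hc => ?_⟩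
    have := h c hc
    rw [orient_swap] at this
    linarith

/-- A maximizer of a linear functional separating `V` is not interior. -/
theorem notMem_interior_of_forall_le {w v : Pt} (hcard : 2 ≤ G.V.card)
    (hw : Set.InjOn (dotp w) G.V) (hv : v ∈ G.V) (h : ∀ x ∈ G.V, dotp w x ≤ dotp w v) :
    v ∉ interior (convexHull ℝ (G.V : Set Pt)) := by
  obtain ⟨x, hx, hxv⟩ := Finset.exists_mem_ne hcard v
  have hlt : dotp w x < dotp w v := lt_of_le_of_ne (h x hx) fun e => hxv (hw hx hv e)
  exact notMem_interior_convexHull (z := v - x) (dotLinear w)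
    (by rw [dotLinear_apply, dotp_sub]; linarith) h

theorem IsTriangulation.upper_face_of_mem_interior (htri : G.IsTriangulation)
    (hgen : NoThreeCollinear G.V) (hcard : 2 ≤ G.V.card) {w v : Pt}
    (hw : Set.InjOn (dotp w) G.V) (hv : v ∈ G.V)
    (hvint : v ∈ interior (convexHull ℝ (G.V : Set Pt))) :
    ∃ p q, G.IsFace v p q ∧ dotp w q < dotp w v ∧ dotp w v < dotp w p := by
  by_cases hmax : ∀ x ∈ G.V, dotp w x ≤ dotp w v
  · exact absurd hvint (notMem_interior_of_forall_le hcard hw hv hmax)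
  push Not at hmax
  obtain ⟨x, hx, hvx⟩ := hmax
  refine (htri.exists_upper_face hgen hw hv hx hvx).resolve_right ?_
  rintro ⟨p, -, hp, hle⟩
  exact notMem_interior_of_orient_nonpos (by rintro rfl; exact hp.false) hle hvint

theorem IsTriangulation.lower_face_of_mem_interior (htri : G.IsTriangulation)
    (hgen : NoThreeCollinear G.V) (hcard : 2 ≤ G.V.card) {w v : Pt}
    (hw : Set.InjOn (dotp w) G.V) (hv : v ∈ G.V)
    (hvint : v ∈ interior (convexHull ℝ (G.V : Set Pt))) :
    ∃ q p, G.IsFace v q p ∧ dotp w q < dotp w v ∧ dotp w v < dotp w p := by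
  by_cases hmax : ∀ x ∈ G.V, dotp w x ≤ dotp w v
  · exact absurd hvint (notMem_interior_of_forall_le hcard hw hv hmax)
  push Not at hmax
  obtain ⟨x, hx, hvx⟩ := hmax
  refine (htri.exists_lower_face hgen hw hv hx hvx).resolve_right ?_
  rintro ⟨p, -, hp, hle⟩
  exact notMem_interior_of_orient_nonneg (by rintro rfl; exact hp.false) hle hvint

/-- Only the two extreme vertices are the middle vertex of no face. -/
theorem IsTriangulation.extreme_of_no_face (htri : G.IsTriangulation)
    (hgen : NoThreeCollinear G.V) {w v : Pt} (hw : Set.InjOn (dotp w) G.V) (hv : v ∈ G.V)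
    (hup : ¬∃ p q, G.IsFace v p q ∧ dotp w q < dotp w v ∧ dotp w v < dotp w p)
    (hdown : ¬∃ q p, G.IsFace v q p ∧ dotp w q < dotp w v ∧ dotp w v < dotp w p) :
    (∀ x ∈ G.V, dotp w x ≤ dotp w v) ∨ ∀ x ∈ G.V, dotp w v ≤ dotp w x := by
  by_contra! hcon
  obtain ⟨⟨x, hx, hvx⟩, c, hc, hcv⟩ := hcon
  obtain ⟨p, hp, hlp, hple⟩ := (htri.exists_upper_face hgen hw hv hx hvx).resolve_left hup
  obtain ⟨q, hq, hlq, hqle⟩ := (htri.exists_lower_face hgen hw hv hx hvx).resolve_left hdown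
  have key : dotp w (c - v) * orient v p q + dotp w (p - v) * orient v q c =
      dotp w (q - v) * orient v p c := by
    simp only [orient, crossp, dotp]; ring
  rw [dotp_sub, dotp_sub, dotp_sub] at key
  have h1 := mul_nonneg_of_nonpos_of_nonpos (sub_neg.2 hcv).le (hple q hq)
  have h2 := mul_nonpos_of_nonneg_of_nonpos (sub_pos.2 hlq).le (hple c hc)
  have h3 := mul_nonneg (sub_pos.2 hlp).le (hqle c hc)
  have h4 : orient v q c = 0 := by
    refine (mul_eq_zero.1 (?_ : (dotp w p - dotp w v) * orient v q c = 0)).resolve_left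
      (sub_pos.2 hlp).ne'
    linarith
  rcases eq_or_eq_of_orient_eq_zero hgen hv hq hc (by rintro rfl; exact hlq.false) h4 with rfl | rfl
  · exact hcv.false
  · exact lt_asymm hcv hlq

end PSLG

namespace PSLG

open Classical in
/-- Counterclockwise empty triangles, with a marked first vertex. -/
def faces (G : PSLG) : Finset (Pt × Pt × Pt) :=
  (G.V ×ˢ G.V ×ˢ G.V).filter fun t => G.IsFace t.1 t.2.1 t.2.2

open Classical in
/-- Vertices in the interior of the convex hull. -/
def interiorVertices (G : PSLG) : Finset Pt :=
  G.V.filter fun v => v ∈ interior (convexHull ℝ (G.V : Set Pt))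

/-- Faces marked at the vertex that is in the middle for the functional `dotp w`. -/
def middleFaces (G : PSLG) (w : Pt) : Finset (Pt × Pt × Pt) :=
  G.faces.filter fun t => (dotp w t.2.2 < dotp w t.1 ∧ dotp w t.1 < dotp w t.2.1) ∨
    (dotp w t.2.1 < dotp w t.1 ∧ dotp w t.1 < dotp w t.2.2)

open Classical in
/-- Marked faces with another face across the side following the marked vertex. -/
def facesWithPrev (G : PSLG) : Finset (Pt × Pt × Pt) :=
  G.faces.filter fun t => ∃ e, G.IsFace t.1 e t.2.1

open Classical in
/-- Marked faces with another face across the side preceding the marked vertex. -/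
def facesWithNext (G : PSLG) : Finset (Pt × Pt × Pt) :=
  G.faces.filter fun t => ∃ d, G.IsFace t.1 t.2.2 d

open Classical in
/-- Marked faces whose marked vertex has degree three and is surrounded by faces. -/
def closedFaces (G : PSLG) : Finset (Pt × Pt × Pt) :=
  G.faces.filter fun t => ∃ e, G.IsFace t.1 e t.2.1 ∧ G.IsFace t.1 t.2.2 e

variable {G : PSLG}

theorem mem_faces {t : Pt × Pt × Pt} : t ∈ G.faces ↔ G.IsFace t.1 t.2.1 t.2.2 := by
  classical
  refine ⟨fun h => (Finset.mem_filter.1 h).2, fun h => Finset.mem_filter.2 ⟨?_, h⟩⟩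
  exact Finset.mem_product.2 ⟨h.mem, Finset.mem_product.2 ⟨h.rotate.mem, h.rotate.rotate.mem⟩⟩

theorem mem_middleFaces {w : Pt} {t : Pt × Pt × Pt} : t ∈ G.middleFaces w ↔
    G.IsFace t.1 t.2.1 t.2.2 ∧ ((dotp w t.2.2 < dotp w t.1 ∧ dotp w t.1 < dotp w t.2.1) ∨
      (dotp w t.2.1 < dotp w t.1 ∧ dotp w t.1 < dotp w t.2.2)) := by
  rw [middleFaces, Finset.mem_filter, mem_faces]

theorem IsTriangulation.card_middleFaces (htri : G.IsTriangulation) (hgen : NoThreeCollinear G.V)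
    (hcard : 2 ≤ G.V.card) {w : Pt} (hw : Set.InjOn (dotp w) G.V) :
    G.V.card + G.interiorVertices.card ≤ (G.middleFaces w).card + 2 := by
  classical
  let up (v : Pt) := ∃ p q, G.IsFace v p q ∧ dotp w q < dotp w v ∧ dotp w v < dotp w p
  let down (v : Pt) := ∃ q p, G.IsFace v q p ∧ dotp w q < dotp w v ∧ dotp w v < dotp w p
  have hU : (G.V.filter up).card ≤
      ((G.middleFaces w).filter fun t => dotp w t.1 < dotp w t.2.1).card := by
    refine (Finset.card_le_card ?_).trans (Finset.card_image_le (f := Prod.fst))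
    intro v hv
    obtain ⟨p, q, hf, h1, h2⟩ := (Finset.mem_filter.1 hv).2
    exact Finset.mem_image.2 ⟨(v, p, q),
      Finset.mem_filter.2 ⟨mem_middleFaces.2 ⟨hf, Or.inl ⟨h1, h2⟩⟩, h2⟩, rfl⟩
  have hD : (G.V.filter down).card ≤
      ((G.middleFaces w).filter fun t => ¬dotp w t.1 < dotp w t.2.1).card := by
    refine (Finset.card_le_card ?_).trans (Finset.card_image_le (f := Prod.fst))
    intro v hv
    obtain ⟨p, q, hf, h1, h2⟩ := (Finset.mem_filter.1 hv).2
    exact Finset.mem_image.2 ⟨(v, p, q),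
      Finset.mem_filter.2 ⟨mem_middleFaces.2 ⟨hf, Or.inr ⟨h1, h2⟩⟩, h1.not_gt⟩, rfl⟩
  have hUD := Finset.card_filter_add_card_filter_not (s := G.middleFaces w)
    (fun t => dotp w t.1 < dotp w t.2.1)
  have hsub : G.interiorVertices ⊆ G.V.filter up ∩ G.V.filter down := by
    intro v hv
    obtain ⟨hv, hvint⟩ := Finset.mem_filter.1 hv
    exact Finset.mem_inter.2
      ⟨Finset.mem_filter.2 ⟨hv, htri.upper_face_of_mem_interior hgen hcard hw hv hvint⟩,
        Finset.mem_filter.2 ⟨hv, htri.lower_face_of_mem_interior hgen hcard hw hv hvint⟩⟩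
  have hext : (G.V \ (G.V.filter up ∪ G.V.filter down)).card ≤ 2 := by
    have hne : G.V.Nonempty := Finset.card_pos.1 (by omega)
    obtain ⟨x, hx, hmax⟩ := G.V.exists_max_image (dotp w) hne
    obtain ⟨y, hy, hmin⟩ := G.V.exists_min_image (dotp w) hne
    refine (Finset.card_le_card (t := {x, y}) ?_).trans Finset.card_le_two
    intro v hv
    rw [Finset.mem_sdiff, Finset.mem_union, Finset.mem_filter, Finset.mem_filter] at hv
    obtain ⟨hv, hv'⟩ := hv
    rw [Finset.mem_insert, Finset.mem_singleton]
    rcases htri.extreme_of_no_face hgen hw hv (fun h => hv' (Or.inl ⟨hv, h⟩))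
      (fun h => hv' (Or.inr ⟨hv, h⟩)) with h | h
    · exact Or.inl (hw hv hx (le_antisymm (hmax v hv) (h x hx)))
    · exact Or.inr (hw hv hy (le_antisymm (h y hy) (hmin v hv)))
  have h1 := Finset.card_union_add_card_inter (G.V.filter up) (G.V.filter down)
  have h2 := Finset.card_le_card hsub
  have h3 := Finset.card_sdiff_add_card_eq_card (s := G.V.filter up ∪ G.V.filter down) (t := G.V)
    (Finset.union_subset (Finset.filter_subset _ _) (Finset.filter_subset _ _))
  omega

/-- Moving the marked vertex of a triple one step forward. -/
def rotateTriple (t : Pt × Pt × Pt) : Pt × Pt × Pt := (t.2.1, t.2.2, t.1)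

theorem rotateTriple_injective : Function.Injective rotateTriple := by
  rintro ⟨a, b, c⟩ ⟨a', b', c'⟩ h
  simp only [rotateTriple, Prod.mk.injEq] at h ⊢
  tauto

theorem three_mul_card_middleFaces_le (w : Pt) :
    3 * (G.middleFaces w).card ≤ G.faces.card := by
  classical
  have h1 := Finset.card_image_of_injective (G.middleFaces w) rotateTriple_injective
  have h2 := Finset.card_image_of_injective (G.middleFaces w)
    (rotateTriple_injective.comp rotateTriple_injective)
  have d1 : Disjoint (G.middleFaces w) ((G.middleFaces w).image rotateTriple) := by
    rw [Finset.disjoint_left]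
    rintro _ hs ht
    obtain ⟨t, ht', rfl⟩ := Finset.mem_image.1 ht
    have h1 := (mem_middleFaces.1 hs).2
    have h2 := (mem_middleFaces.1 ht').2
    simp only [rotateTriple] at h1
    grind
  have d2 : Disjoint (G.middleFaces w ∪ (G.middleFaces w).image rotateTriple)
      ((G.middleFaces w).image (rotateTriple ∘ rotateTriple)) := by
    rw [Finset.disjoint_left]
    rintro _ hs ht
    obtain ⟨t, ht', rfl⟩ := Finset.mem_image.1 ht
    have h2 := (mem_middleFaces.1 ht').2
    rcases Finset.mem_union.1 hs with hs | hs
    · have h1 := (mem_middleFaces.1 hs).2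
      simp only [rotateTriple, Function.comp] at h1
      grind
    · obtain ⟨s, hs, he⟩ := Finset.mem_image.1 hs
      obtain rfl := rotateTriple_injective he
      have h1 := (mem_middleFaces.1 hs).2
      simp only [rotateTriple] at h1
      grind
  have h3 := Finset.card_union_of_disjoint d1
  have h4 := Finset.card_union_of_disjoint d2
  have h5 : G.middleFaces w ∪ (G.middleFaces w).image rotateTriple ∪
      (G.middleFaces w).image (rotateTriple ∘ rotateTriple) ⊆ G.faces := by
    intro t ht
    simp only [Finset.mem_union, Finset.mem_image] at ht
    rcases ht with (ht | ⟨s, hs, rfl⟩) | ⟨s, hs, rfl⟩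
    · exact mem_faces.2 (mem_middleFaces.1 ht).1
    · exact mem_faces.2 (mem_middleFaces.1 hs).1.rotate
    · exact mem_faces.2 (mem_middleFaces.1 hs).1.rotate.rotate
  have h6 := Finset.card_le_card h5
  omega

theorem mem_facesWithPrev {t : Pt × Pt × Pt} :
    t ∈ G.facesWithPrev ↔ G.IsFace t.1 t.2.1 t.2.2 ∧ ∃ e, G.IsFace t.1 e t.2.1 := by
  classical
  rw [facesWithPrev, Finset.mem_filter, mem_faces]

theorem mem_facesWithNext {t : Pt × Pt × Pt} :
    t ∈ G.facesWithNext ↔ G.IsFace t.1 t.2.1 t.2.2 ∧ ∃ d, G.IsFace t.1 t.2.2 d := by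
  classical
  rw [facesWithNext, Finset.mem_filter, mem_faces]

theorem mem_closedFaces {t : Pt × Pt × Pt} :
    t ∈ G.closedFaces ↔ G.IsFace t.1 t.2.1 t.2.2 ∧
      ∃ e, G.IsFace t.1 e t.2.1 ∧ G.IsFace t.1 t.2.2 e := by
  classical
  rw [closedFaces, Finset.mem_filter, mem_faces]

/-- The two kinds of interior sides are interchanged by rotation. -/
theorem card_facesWithPrev_le_card_facesWithNext :
    G.facesWithPrev.card ≤ G.facesWithNext.card := by
  classical
  rw [← Finset.card_image_of_injective G.facesWithPrev rotateTriple_injective]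
  refine Finset.card_le_card fun t ht => ?_
  obtain ⟨s, hs, rfl⟩ := Finset.mem_image.1 ht
  obtain ⟨hf, e, he⟩ := mem_facesWithPrev.1 hs
  exact mem_facesWithNext.2 ⟨hf.rotate, e, he.rotate.rotate⟩

theorem IsTriangulation.card_faces_le (htri : G.IsTriangulation) (hgen : NoThreeCollinear G.V) :
    G.faces.card + G.interiorVertices.card ≤ G.facesWithPrev.card + G.V.card := by
  classical
  have hside : ∀ t ∈ G.faces \ G.facesWithPrev, G.IsFace t.1 t.2.1 t.2.2 ∧
      ∀ x ∈ G.V, 0 ≤ orient t.1 t.2.1 x := by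
    intro t ht
    obtain ⟨ht, hn⟩ := Finset.mem_sdiff.1 ht
    have hf := mem_faces.1 ht
    refine ⟨hf, fun x hx => ?_⟩
    by_contra hlt
    have hpos : 0 < orient t.2.1 t.1 x := by rw [orient_swap]; linarith
    obtain ⟨e, he⟩ := htri.exists_isFace hgen (edge_symm hf.1) hx hpos
    exact hn (mem_facesWithPrev.2 ⟨hf, e, he.rotate⟩)
  have hinj : Set.InjOn Prod.fst (↑(G.faces \ G.facesWithPrev) : Set (Pt × Pt × Pt)) := by
    rintro ⟨a, b, c⟩ h ⟨a', b', c'⟩ h' rfl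
    obtain ⟨hf, hs⟩ := hside _ h
    obtain ⟨hf', hs'⟩ := hside _ h'
    simp only at hf hs hf' hs'
    have e1 := hs b' hf'.rotate.mem
    have e2 := hs' b hf.rotate.mem
    have e3 : orient a b' b = -orient a b b' := by simp only [orient, crossp]; ring
    rcases eq_or_eq_of_orient_eq_zero hgen hf.mem hf.rotate.mem hf'.rotate.mem hf.ne₁₂
      (by linarith) with h | rfl
    · exact absurd h.symm hf'.ne₁₂
    · rw [hf.apex_unique hgen hf']
  have himg : (G.faces \ G.facesWithPrev).image Prod.fst ⊆ G.V \ G.interiorVertices := by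
    intro a ha
    obtain ⟨t, ht, rfl⟩ := Finset.mem_image.1 ha
    obtain ⟨hf, hs⟩ := hside t ht
    refine Finset.mem_sdiff.2 ⟨hf.mem, fun h => ?_⟩
    exact notMem_interior_of_orient_nonneg hf.ne₁₂ hs (Finset.mem_filter.1 h).2
  have h1 := Finset.card_le_card himg
  rw [Finset.card_image_of_injOn hinj] at h1
  have h2 := Finset.card_sdiff_add_card_eq_card (s := G.interiorVertices) (t := G.V)
    (Finset.filter_subset _ _)
  have h3 := Finset.card_sdiff_add_card_eq_card (s := G.facesWithPrev) (t := G.faces)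
    (Finset.filter_subset _ _)
  omega

/-- Three faces closing up around `a` contain all neighbors of `a`. -/
theorem IsFace.adj_of_closed (hgen : NoThreeCollinear G.V) {a b c e x : Pt}
    (h₁ : G.IsFace a b c) (h₂ : G.IsFace a c e) (h₃ : G.IsFace a e b) (hx : s(a, x) ∈ G.E) :
    x = b ∨ x = c ∨ x = e := by
  have hcone : ∀ {p q : Pt}, G.IsFace a p q → coneIndicator a (x - a) p q ≠ 0 → x = p := by
    intro p q hf hne
    have hcond : 0 ≤ crossp (p - a) (x - a) ∧ crossp (q - a) (x - a) < 0 := by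
      by_contra hcon
      exact hne (if_neg hcon)
    rcases eq_or_lt_of_le hcond.1 with h | h
    · exact (eq_or_eq_of_orient_eq_zero hgen hf.mem hf.rotate.mem (right_mem hx) hf.ne₁₂
        h.symm).resolve_left (ne_of_edge hx).symm
    · refine absurd ⟨h, ?_⟩ (hf.not_adj_inside hgen hx)
      have : orient a x q = -crossp (q - a) (x - a) := by simp only [orient, crossp]; ring
      linarith [hcond.2]
  have := coneIndicator_triangle (sub_ne_zero.2 (ne_of_edge hx).symm) h₁.pos h₂.pos h₃.pos
  by_cases hb : coneIndicator a (x - a) b c = 0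
  · by_cases hc : coneIndicator a (x - a) c e = 0
    · exact Or.inr (Or.inr (hcone h₃ (by omega)))
    · exact Or.inr (Or.inl (hcone h₂ hc))
  · exact Or.inl (hcone h₁ hb)

theorem card_closedFaces_le (hgen : NoThreeCollinear G.V) :
    G.closedFaces.card ≤ 3 * G.interiorVertices.card := by
  classical
  refine Finset.card_le_mul_card_image_of_maps_to (f := Prod.fst) (fun t ht => ?_) 3
    (fun a ha => ?_)
  · obtain ⟨hf, e, h1, h2⟩ := mem_closedFaces.1 ht
    refine Finset.mem_filter.2 ⟨hf.mem, ?_⟩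
    refine mem_interior_convexHull_of_orient_pos hf.rotate.mem hf.rotate.rotate.mem
      h1.rotate.mem ?_ ?_ ?_
    · rw [orient_rotate]; exact hf.pos
    · rw [orient_rotate]; exact h2.pos
    · rw [orient_rotate]; exact h1.pos
  · rcases (G.closedFaces.filter fun t => t.1 = a).eq_empty_or_nonempty with h | ⟨t, ht⟩
    · simp [h]
    obtain ⟨htc, rfl⟩ := Finset.mem_filter.1 ht
    obtain ⟨hf, e, h1, h2⟩ := mem_closedFaces.1 htc
    refine (Finset.card_le_card_of_injOn (fun s => s.2.1) (t := {t.2.1, t.2.2, e}) ?_ ?_).trans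
      Finset.card_le_three
    · intro s hs
      obtain ⟨hs, hst⟩ := Finset.mem_filter.1 hs
      have hsf := (mem_closedFaces.1 hs).1
      rw [hst] at hsf
      simpa using hf.adj_of_closed hgen h2 h1 hsf.1
    · rintro ⟨a, b, c⟩ h ⟨a', b', c'⟩ h' hb
      obtain ⟨hs, hst⟩ := Finset.mem_filter.1 h
      obtain ⟨hs', hst'⟩ := Finset.mem_filter.1 h'
      have hsf := (mem_closedFaces.1 hs).1
      have hsf' := (mem_closedFaces.1 hs').1
      simp only at hb hst hst' hsf hsf'
      subst hb
      rw [hst] at hsf ⊢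
      rw [hst'] at hsf' ⊢
      rw [hsf.apex_unique hgen hsf']

end PSLG

theorem cycleEdgeSet_three (a b c : Pt) :
    cycleEdgeSet [a, b, c] = {s(a, b), s(b, c), s(c, a)} := by
  simp [cycleEdgeSet, cyclePairs_three]

theorem cycleEdgeSet_four (a b c d : Pt) :
    cycleEdgeSet [a, b, c, d] = {s(a, b), s(b, c), s(c, d), s(d, a)} := by
  simp [cycleEdgeSet, cyclePairs_four]

theorem cycleEdgeSet_five (a b c d e : Pt) :
    cycleEdgeSet [a, b, c, d, e] = {s(a, b), s(b, c), s(c, d), s(d, e), s(e, a)} := by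
  simp [cycleEdgeSet, cyclePairs_five]

theorem card_cycleEdgeSet_three {a b c : Pt} (h : [a, b, c].Nodup) :
    (cycleEdgeSet [a, b, c]).card = 3 := by
  have : [s(a, b), s(b, c), s(c, a)].Nodup := by
    simp only [List.nodup_cons, List.mem_cons, List.not_mem_nil, Sym2.eq_iff] at h ⊢
    grind
  rw [cycleEdgeSet, cyclePairs_three]
  exact List.toFinset_card_of_nodup this

theorem card_cycleEdgeSet_four {a b c d : Pt} (h : [a, b, c, d].Nodup) :
    (cycleEdgeSet [a, b, c, d]).card = 4 := by
  have : [s(a, b), s(b, c), s(c, d), s(d, a)].Nodup := by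
    simp only [List.nodup_cons, List.mem_cons, List.not_mem_nil, Sym2.eq_iff] at h ⊢
    grind
  rw [cycleEdgeSet, cyclePairs_four]
  exact List.toFinset_card_of_nodup this

theorem card_cycleEdgeSet_five {a b c d e : Pt} (h : [a, b, c, d, e].Nodup) :
    (cycleEdgeSet [a, b, c, d, e]).card = 5 := by
  have : [s(a, b), s(b, c), s(c, d), s(d, e), s(e, a)].Nodup := by
    simp only [List.nodup_cons, List.mem_cons, List.not_mem_nil, Sym2.eq_iff] at h ⊢
    grind
  rw [cycleEdgeSet, cyclePairs_five]
  exact List.toFinset_card_of_nodup this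

/-- A triangle is determined by its edge set up to rotation and reflection. -/
theorem eq_of_cycleEdgeSet_three {a b c a' b' c' : Pt} (h : [a, b, c].Nodup)
    (h' : [a', b', c'].Nodup) (he : cycleEdgeSet [a, b, c] = cycleEdgeSet [a', b', c']) :
    [a', b', c'] ∈ [[a, b, c], [b, c, a], [c, a, b], [c, b, a], [b, a, c], [a, c, b]] := by
  rw [cycleEdgeSet_three, cycleEdgeSet_three] at he
  have h1 : s(a', b') ∈ ({s(a, b), s(b, c), s(c, a)} : Finset (Sym2 Pt)) := by rw [he]; simp
  have h2 : s(b', c') ∈ ({s(a, b), s(b, c), s(c, a)} : Finset (Sym2 Pt)) := by rw [he]; simp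
  clear he
  simp only [Finset.mem_insert, Finset.mem_singleton, Sym2.eq_iff, List.nodup_cons, List.mem_cons,
    List.not_mem_nil, List.cons.injEq] at *
  grind

/-- A quadrilateral is determined by its edge set up to rotation and reflection. -/
theorem eq_of_cycleEdgeSet_four {a b c d a' b' c' d' : Pt} (h : [a, b, c, d].Nodup)
    (h' : [a', b', c', d'].Nodup)
    (he : cycleEdgeSet [a, b, c, d] = cycleEdgeSet [a', b', c', d']) :
    [a', b', c', d'] ∈ [[a, b, c, d], [b, c, d, a], [c, d, a, b], [d, a, b, c],
      [d, c, b, a], [c, b, a, d], [b, a, d, c], [a, d, c, b]] := by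
  rw [cycleEdgeSet_four, cycleEdgeSet_four] at he
  have h1 : s(a', b') ∈ ({s(a, b), s(b, c), s(c, d), s(d, a)} : Finset (Sym2 Pt)) := by
    rw [he]; simp
  have h2 : s(b', c') ∈ ({s(a, b), s(b, c), s(c, d), s(d, a)} : Finset (Sym2 Pt)) := by
    rw [he]; simp
  have h3 : s(c', d') ∈ ({s(a, b), s(b, c), s(c, d), s(d, a)} : Finset (Sym2 Pt)) := by
    rw [he]; simp
  clear he
  simp only [Finset.mem_insert, Finset.mem_singleton, Sym2.eq_iff, List.nodup_cons, List.mem_cons,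
    List.not_mem_nil, List.cons.injEq] at *
  rcases h1 with (⟨rfl, rfl⟩ | ⟨rfl, rfl⟩) | (⟨rfl, rfl⟩ | ⟨rfl, rfl⟩) | (⟨rfl, rfl⟩ | ⟨rfl, rfl⟩) |
    (⟨rfl, rfl⟩ | ⟨rfl, rfl⟩) <;> grind

/-- A pentagon is determined by its edge set up to rotation and reflection. -/
theorem eq_of_cycleEdgeSet_five {a b c d e a' b' c' d' e' : Pt} (h : [a, b, c, d, e].Nodup)
    (h' : [a', b', c', d', e'].Nodup)
    (he : cycleEdgeSet [a, b, c, d, e] = cycleEdgeSet [a', b', c', d', e']) :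
    [a', b', c', d', e'] ∈ [[a, b, c, d, e], [b, c, d, e, a], [c, d, e, a, b], [d, e, a, b, c],
      [e, a, b, c, d], [e, d, c, b, a], [d, c, b, a, e], [c, b, a, e, d], [b, a, e, d, c],
      [a, e, d, c, b]] := by
  rw [cycleEdgeSet_five, cycleEdgeSet_five] at he
  have h1 : s(a', b') ∈ ({s(a, b), s(b, c), s(c, d), s(d, e), s(e, a)} : Finset (Sym2 Pt)) := by
    rw [he]; simp
  have h2 : s(b', c') ∈ ({s(a, b), s(b, c), s(c, d), s(d, e), s(e, a)} : Finset (Sym2 Pt)) := by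
    rw [he]; simp
  have h3 : s(c', d') ∈ ({s(a, b), s(b, c), s(c, d), s(d, e), s(e, a)} : Finset (Sym2 Pt)) := by
    rw [he]; simp
  have h4 : s(d', e') ∈ ({s(a, b), s(b, c), s(c, d), s(d, e), s(e, a)} : Finset (Sym2 Pt)) := by
    rw [he]; simp
  clear he
  simp only [Finset.mem_insert, Finset.mem_singleton, Sym2.eq_iff, List.nodup_cons, List.mem_cons,
    List.not_mem_nil, List.cons.injEq] at *
  rcases h1 with (⟨rfl, rfl⟩ | ⟨rfl, rfl⟩) | (⟨rfl, rfl⟩ | ⟨rfl, rfl⟩) | (⟨rfl, rfl⟩ | ⟨rfl, rfl⟩) |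
    (⟨rfl, rfl⟩ | ⟨rfl, rfl⟩) | (⟨rfl, rfl⟩ | ⟨rfl, rfl⟩) <;> grind

/-- Twice the signed area of a closed polygon. -/
def shoelace (L : List Pt) : ℝ := ((cyclePairs L).map fun p => crossp p.1 p.2).sum

theorem shoelace_four (a b c d : Pt) : shoelace [a, b, c, d] = orient a b c + orient a c d := by
  simp only [shoelace, cyclePairs_four, List.map_cons, List.map_nil, List.sum_cons,
    List.sum_nil, orient, crossp, Prod.fst_sub, Prod.snd_sub]
  ring

theorem shoelace_five (a b c d e : Pt) :
    shoelace [a, b, c, d, e] = orient a b c + orient a c d + orient a d e := by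
  simp only [shoelace, cyclePairs_five, List.map_cons, List.map_nil, List.sum_cons,
    List.sum_nil, orient, crossp, Prod.fst_sub, Prod.snd_sub]
  ring

namespace PSLG

variable {G : PSLG}

theorem mem_rotations_of_cycleEdgeSet_three {a b c a' b' c' : Pt} (h : [a, b, c].Nodup)
    (h' : [a', b', c'].Nodup) (hpos : 0 < orient a b c) (hpos' : 0 < orient a' b' c')
    (he : cycleEdgeSet [a, b, c] = cycleEdgeSet [a', b', c']) :
    [a', b', c'] ∈ [[a, b, c], [b, c, a], [c, a, b]] := by
  have := eq_of_cycleEdgeSet_three h h' he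
  simp only [List.mem_cons, List.cons.injEq, List.not_mem_nil, and_true, or_false] at this ⊢
  simp only [orient, crossp, Prod.fst_sub, Prod.snd_sub] at hpos hpos'
  rcases this with h | h | h | ⟨rfl, rfl, rfl⟩ | ⟨rfl, rfl, rfl⟩ | ⟨rfl, rfl, rfl⟩
  · exact Or.inl h
  · exact Or.inr (Or.inl h)
  · exact Or.inr (Or.inr h)
  all_goals exfalso; linarith

theorem mem_rotations_of_cycleEdgeSet_four {a b c d a' b' c' d' : Pt} (h : [a, b, c, d].Nodup)
    (h' : [a', b', c', d'].Nodup) (hpos : 0 < shoelace [a, b, c, d])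
    (hpos' : 0 < shoelace [a', b', c', d'])
    (he : cycleEdgeSet [a, b, c, d] = cycleEdgeSet [a', b', c', d']) :
    [a', b', c', d'] ∈ [[a, b, c, d], [b, c, d, a], [c, d, a, b], [d, a, b, c]] := by
  have := eq_of_cycleEdgeSet_four h h' he
  simp only [List.mem_cons, List.cons.injEq, List.not_mem_nil, and_true, or_false] at this ⊢
  simp only [shoelace_four, orient, crossp, Prod.fst_sub, Prod.snd_sub] at hpos hpos'
  rcases this with h | h | h | h | ⟨rfl, rfl, rfl, rfl⟩ | ⟨rfl, rfl, rfl, rfl⟩ |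
    ⟨rfl, rfl, rfl, rfl⟩ | ⟨rfl, rfl, rfl, rfl⟩
  · exact Or.inl h
  · exact Or.inr (Or.inl h)
  · exact Or.inr (Or.inr (Or.inl h))
  · exact Or.inr (Or.inr (Or.inr h))
  all_goals exfalso; linarith

theorem mem_rotations_of_cycleEdgeSet_five {a b c d e a' b' c' d' e' : Pt} (h : [a, b, c, d, e].Nodup)
    (h' : [a', b', c', d', e'].Nodup) (hpos : 0 < shoelace [a, b, c, d, e])
    (hpos' : 0 < shoelace [a', b', c', d', e'])
    (he : cycleEdgeSet [a, b, c, d, e] = cycleEdgeSet [a', b', c', d', e']) :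
    [a', b', c', d', e'] ∈ [[a, b, c, d, e], [b, c, d, e, a], [c, d, e, a, b], [d, e, a, b, c],
      [e, a, b, c, d]] := by
  have := eq_of_cycleEdgeSet_five h h' he
  simp only [List.mem_cons, List.cons.injEq, List.not_mem_nil, and_true, or_false] at this ⊢
  simp only [shoelace_five, orient, crossp, Prod.fst_sub, Prod.snd_sub] at hpos hpos'
  rcases this with h | h | h | h | h | ⟨rfl, rfl, rfl, rfl, rfl⟩ | ⟨rfl, rfl, rfl, rfl, rfl⟩ |
    ⟨rfl, rfl, rfl, rfl, rfl⟩ | ⟨rfl, rfl, rfl, rfl, rfl⟩ | ⟨rfl, rfl, rfl, rfl, rfl⟩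
  · exact Or.inl h
  · exact Or.inr (Or.inl h)
  · exact Or.inr (Or.inr (Or.inl h))
  · exact Or.inr (Or.inr (Or.inr (Or.inl h)))
  · exact Or.inr (Or.inr (Or.inr (Or.inr h)))
  all_goals exfalso; linarith

open Classical in
/-- Pairs of faces `a b c`, `b a d` sharing a side `a b` that is directed by `dotp w`. -/
def quads (G : PSLG) (w : Pt) : Finset (Pt × Pt × Pt × Pt) :=
  (G.V ×ˢ G.V ×ˢ G.V ×ˢ G.V).filter fun t =>
    G.IsFace t.1 t.2.1 t.2.2.1 ∧ G.IsFace t.2.1 t.1 t.2.2.2 ∧ dotp w t.1 < dotp w t.2.1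

open Classical in
/-- Three consecutive faces `a e b`, `a b c`, `a c d` around `a` with `e ≠ d`. -/
def pentagons (G : PSLG) : Finset (Pt × Pt × Pt × Pt × Pt) :=
  (G.V ×ˢ G.V ×ˢ G.V ×ˢ G.V ×ˢ G.V).filter fun t =>
    G.IsFace t.1 t.2.1 t.2.2.1 ∧ G.IsFace t.1 t.2.2.1 t.2.2.2.1 ∧
      G.IsFace t.1 t.2.2.2.1 t.2.2.2.2 ∧ t.2.1 ≠ t.2.2.2.2

theorem mem_quads {w a b c d : Pt} : (a, b, c, d) ∈ G.quads w ↔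
    G.IsFace a b c ∧ G.IsFace b a d ∧ dotp w a < dotp w b := by
  classical
  refine ⟨fun h => (Finset.mem_filter.1 h).2, fun h => Finset.mem_filter.2 ⟨?_, h⟩⟩
  simp only [Finset.mem_product]
  exact ⟨h.1.mem, h.1.rotate.mem, h.1.rotate.rotate.mem, h.2.1.rotate.rotate.mem⟩

theorem mem_pentagons {a e b c d : Pt} : (a, e, b, c, d) ∈ G.pentagons ↔
    G.IsFace a e b ∧ G.IsFace a b c ∧ G.IsFace a c d ∧ e ≠ d := by
  classical
  refine ⟨fun h => (Finset.mem_filter.1 h).2, fun h => Finset.mem_filter.2 ⟨?_, h⟩⟩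
  simp only [Finset.mem_product]
  exact ⟨h.1.mem, h.1.rotate.mem, h.2.1.rotate.mem, h.2.2.1.rotate.mem, h.2.2.1.rotate.rotate.mem⟩

theorem card_facesWithPrev_le_two_mul_card_quads {w : Pt} (hw : Set.InjOn (dotp w) G.V) :
    G.facesWithPrev.card ≤ 2 * (G.quads w).card := by
  classical
  have hsub : G.facesWithPrev ⊆ (G.quads w).image (fun t => (t.1, t.2.1, t.2.2.1)) ∪
      (G.quads w).image fun t => (t.2.1, t.1, t.2.2.2) := by
    rintro ⟨a, b, c⟩ ht
    obtain ⟨hf, e, he⟩ := mem_facesWithPrev.1 ht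
    simp only at hf he
    rw [Finset.mem_union, Finset.mem_image, Finset.mem_image]
    rcases lt_trichotomy (dotp w a) (dotp w b) with h | h | h
    · exact Or.inl ⟨(a, b, c, e), mem_quads.2 ⟨hf, he.rotate.rotate, h⟩, rfl⟩
    · exact absurd (hw hf.mem hf.rotate.mem h) hf.ne₁₂
    · exact Or.inr ⟨(b, a, e, c), mem_quads.2 ⟨he.rotate.rotate, hf, h⟩, rfl⟩
  have h1 := (Finset.card_le_card hsub).trans (Finset.card_union_le _ _)
  have h2 := Finset.card_image_le (s := G.quads w) (f := fun t => (t.1, t.2.1, t.2.2.1))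
  have h3 := Finset.card_image_le (s := G.quads w) (f := fun t => (t.2.1, t.1, t.2.2.2))
  omega

theorem card_le_card_pentagons :
    G.facesWithPrev.card + G.facesWithNext.card ≤
      G.pentagons.card + G.closedFaces.card + G.faces.card := by
  classical
  have hsub : G.facesWithPrev ∩ G.facesWithNext ⊆
      G.pentagons.image (fun t => (t.1, t.2.2.1, t.2.2.2.1)) ∪ G.closedFaces := by
    rintro ⟨a, b, c⟩ ht
    obtain ⟨h1, h2⟩ := Finset.mem_inter.1 ht
    obtain ⟨hf, e, he⟩ := mem_facesWithPrev.1 h1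
    obtain ⟨-, d, hd⟩ := mem_facesWithNext.1 h2
    rw [Finset.mem_union, Finset.mem_image]
    by_cases hed : e = d
    · subst hed
      exact Or.inr (mem_closedFaces.2 ⟨hf, e, he, hd⟩)
    · exact Or.inl ⟨(a, e, b, c, d), mem_pentagons.2 ⟨he, hf, hd, hed⟩, rfl⟩
  have h1 := (Finset.card_le_card hsub).trans (Finset.card_union_le _ _)
  have h2 := Finset.card_image_le (s := G.pentagons) (f := fun t => (t.1, t.2.2.1, t.2.2.2.1))
  have h3 := Finset.card_union_add_card_inter G.facesWithPrev G.facesWithNext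
  have h4 : (G.facesWithPrev ∪ G.facesWithNext).card ≤ G.faces.card :=
    Finset.card_le_card (Finset.union_subset (Finset.filter_subset _ _) (Finset.filter_subset _ _))
  omega

theorem IsFace.nodup {a b c : Pt} (h : G.IsFace a b c) : [a, b, c].Nodup :=
  h.isStarShapedPolygon.1.2.1

theorem injOn_middleFaces (w : Pt) : Set.InjOn
    (fun t : Pt × Pt × Pt => cycleEdgeSet [t.1, t.2.1, t.2.2]) (G.middleFaces w) := by
  rintro ⟨a, b, c⟩ h ⟨a', b', c'⟩ h' he
  obtain ⟨hf, hm⟩ := mem_middleFaces.1 h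
  obtain ⟨hf', hm'⟩ := mem_middleFaces.1 h'
  simp only at hf hf' hm hm'
  have := mem_rotations_of_cycleEdgeSet_three hf.nodup hf'.nodup hf.pos hf'.pos he
  simp only [List.mem_cons, List.cons.injEq, List.not_mem_nil, and_true, or_false] at this
  rcases this with ⟨rfl, rfl, rfl⟩ | ⟨rfl, rfl, rfl⟩ | ⟨rfl, rfl, rfl⟩
  · rfl
  all_goals exfalso; grind

theorem shoelace_quad_pos {a b c d : Pt} (h : G.IsFace a b c) (h' : G.IsFace b a d) :
    0 < shoelace [a, d, b, c] := by
  rw [shoelace_four, orient_rotate]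
  exact add_pos h'.pos h.pos

theorem injOn_quads (hgen : NoThreeCollinear G.V) (w : Pt) : Set.InjOn
    (fun t : Pt × Pt × Pt × Pt => cycleEdgeSet [t.1, t.2.2.2, t.2.1, t.2.2.1]) (G.quads w) := by
  rintro ⟨a, b, c, d⟩ ht ⟨a', b', c', d'⟩ ht' he
  obtain ⟨h, h', hl⟩ := mem_quads.1 ht
  obtain ⟨k, k', kl⟩ := mem_quads.1 ht'
  have := mem_rotations_of_cycleEdgeSet_four (h.isStarShapedPolygon_quad h').1.2.1
    (k.isStarShapedPolygon_quad k').1.2.1 (shoelace_quad_pos h h') (shoelace_quad_pos k k') he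
  simp only [List.mem_cons, List.cons.injEq, List.not_mem_nil, and_true, or_false] at this
  rcases this with ⟨rfl, rfl, rfl, rfl⟩ | ⟨rfl, rfl, rfl, rfl⟩ | ⟨rfl, rfl, rfl, rfl⟩ |
    ⟨rfl, rfl, rfl, rfl⟩
  · rfl
  · exact absurd (h.rotate.rotate.apex_unique hgen k.rotate) h'.ne₃₁.symm
  · exact absurd hl kl.not_gt
  · exact absurd (h.rotate.apex_unique hgen k.rotate.rotate) h'.ne₂₃

theorem shoelace_pentagon_pos {a e b c d : Pt} (h₁ : G.IsFace a e b) (h₂ : G.IsFace a b c)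
    (h₃ : G.IsFace a c d) : 0 < shoelace [a, e, b, c, d] := by
  rw [shoelace_five]
  exact add_pos (add_pos h₁.pos h₂.pos) h₃.pos

theorem injOn_pentagons (hgen : NoThreeCollinear G.V) : Set.InjOn
    (fun t : Pt × Pt × Pt × Pt × Pt =>
      cycleEdgeSet [t.1, t.2.1, t.2.2.1, t.2.2.2.1, t.2.2.2.2]) G.pentagons := by
  rintro ⟨a, e, b, c, d⟩ ht ⟨a', e', b', c', d'⟩ ht' he
  obtain ⟨h₁, h₂, h₃, hed⟩ := mem_pentagons.1 ht
  obtain ⟨k₁, k₂, k₃, ked⟩ := mem_pentagons.1 ht'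
  have := mem_rotations_of_cycleEdgeSet_five (IsFace.isStarShapedPolygon_pentagon hgen h₁ h₂ h₃ hed).1.2.1
    (IsFace.isStarShapedPolygon_pentagon hgen k₁ k₂ k₃ ked).1.2.1
    (shoelace_pentagon_pos h₁ h₂ h₃) (shoelace_pentagon_pos k₁ k₂ k₃) he
  simp only [List.mem_cons, List.cons.injEq, List.not_mem_nil, and_true, or_false] at this
  rcases this with ⟨rfl, rfl, rfl, rfl, rfl⟩ | ⟨rfl, rfl, rfl, rfl, rfl⟩ |
    ⟨rfl, rfl, rfl, rfl, rfl⟩ | ⟨rfl, rfl, rfl, rfl, rfl⟩ | ⟨rfl, rfl, rfl, rfl, rfl⟩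
  · rfl
  · exact absurd (h₁.rotate.apex_unique hgen k₁) h₂.ne₃₁.symm
  · exact absurd (h₂.rotate.apex_unique hgen k₁) h₃.ne₃₁.symm
  · exact absurd (h₁.rotate.apex_unique hgen k₃.rotate) (h₂.ne₃₁.symm)
  · exact absurd (h₂.rotate.apex_unique hgen k₃.rotate) h₃.ne₃₁.symm

theorem cycleEdgeSet_subset {L : List Pt} (h : IsCycleIn G L) : cycleEdgeSet L ⊆ G.E := by
  intro e he
  rw [cycleEdgeSet, List.mem_toFinset] at he
  obtain ⟨p, hp, rfl⟩ := List.mem_map.1 he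
  exact h.2.2 p hp

theorem card_le_starCount (hgen : NoThreeCollinear G.V) (w : Pt) :
    (G.middleFaces w).card + (G.quads w).card + G.pentagons.card ≤ starCount G := by
  classical
  let T₃ := (G.middleFaces w).image fun t => cycleEdgeSet [t.1, t.2.1, t.2.2]
  let T₄ := (G.quads w).image fun t => cycleEdgeSet [t.1, t.2.2.2, t.2.1, t.2.2.1]
  let T₅ := G.pentagons.image fun t =>
    cycleEdgeSet [t.1, t.2.1, t.2.2.1, t.2.2.2.1, t.2.2.2.2]
  have h₃ : ∀ E' ∈ T₃, ∃ a b c, IsStarShapedPolygon G [a, b, c] ∧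
      E' = cycleEdgeSet [a, b, c] := by
    intro E' hE
    obtain ⟨⟨a, b, c⟩, ht, rfl⟩ := Finset.mem_image.1 hE
    exact ⟨a, b, c, (mem_middleFaces.1 ht).1.isStarShapedPolygon, rfl⟩
  have h₄ : ∀ E' ∈ T₄, ∃ a b c d, IsStarShapedPolygon G [a, b, c, d] ∧
      E' = cycleEdgeSet [a, b, c, d] := by
    intro E' hE
    obtain ⟨⟨a, b, c, d⟩, ht, rfl⟩ := Finset.mem_image.1 hE
    have h := mem_quads.1 ht
    exact ⟨a, d, b, c, h.1.isStarShapedPolygon_quad h.2.1, rfl⟩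
  have h₅ : ∀ E' ∈ T₅, ∃ a b c d e, IsStarShapedPolygon G [a, b, c, d, e] ∧
      E' = cycleEdgeSet [a, b, c, d, e] := by
    intro E' hE
    obtain ⟨⟨a, e, b, c, d⟩, ht, rfl⟩ := Finset.mem_image.1 hE
    have h := mem_pentagons.1 ht
    exact ⟨a, e, b, c, d, IsFace.isStarShapedPolygon_pentagon hgen h.1 h.2.1 h.2.2.1 h.2.2.2, rfl⟩
  have c₃ : ∀ E' ∈ T₃, E'.card = 3 := by
    intro E' hE
    obtain ⟨a, b, c, h, rfl⟩ := h₃ E' hE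
    exact card_cycleEdgeSet_three h.1.2.1
  have c₄ : ∀ E' ∈ T₄, E'.card = 4 := by
    intro E' hE
    obtain ⟨a, b, c, d, h, rfl⟩ := h₄ E' hE
    exact card_cycleEdgeSet_four h.1.2.1
  have c₅ : ∀ E' ∈ T₅, E'.card = 5 := by
    intro E' hE
    obtain ⟨a, b, c, d, e, h, rfl⟩ := h₅ E' hE
    exact card_cycleEdgeSet_five h.1.2.1
  have d₁ : Disjoint T₃ T₄ := Finset.disjoint_left.2 fun E' h h' => by
    have := c₃ E' h; have := c₄ E' h'; omega
  have d₂ : Disjoint (T₃ ∪ T₄) T₅ := Finset.disjoint_left.2 fun E' h h' => by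
    have := c₅ E' h'
    rcases Finset.mem_union.1 h with h | h
    · have := c₃ E' h; omega
    · have := c₄ E' h; omega
  have e₁ : T₃.card = (G.middleFaces w).card := Finset.card_image_of_injOn (injOn_middleFaces w)
  have e₂ : T₄.card = (G.quads w).card := Finset.card_image_of_injOn (injOn_quads hgen w)
  have e₃ : T₅.card = G.pentagons.card := Finset.card_image_of_injOn (injOn_pentagons hgen)
  rw [← e₁, ← e₂, ← e₃, ← Finset.card_union_of_disjoint d₁, ← Finset.card_union_of_disjoint d₂,
    starCount, ← Set.ncard_coe_finset]
  refine Set.ncard_le_ncard (fun E' hE => ?_) (G.E.powerset.finite_toSet.subset ?_)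
  · rcases Finset.mem_union.1 hE with hE | hE
    · rcases Finset.mem_union.1 hE with hE | hE
      · obtain ⟨a, b, c, h, rfl⟩ := h₃ E' hE
        exact ⟨_, h, rfl⟩
      · obtain ⟨a, b, c, d, h, rfl⟩ := h₄ E' hE
        exact ⟨_, h, rfl⟩
    · obtain ⟨a, b, c, d, e, h, rfl⟩ := h₅ E' hE
      exact ⟨_, h, rfl⟩
  · rintro _ ⟨L, hL, rfl⟩
    exact Finset.mem_coe.2 (Finset.mem_powerset.2 (cycleEdgeSet_subset hL.1))

end PSLG

/-- a triangulation of `n ≥ 3` points (no three collinear), `k` of which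
lie in the interior of the convex hull, contains at least `3n + 4k − 14` star-shaped
polygons. -/
theorem starShaped_min_bound (G : PSLG)
    (hcard : 3 ≤ G.V.card) (hgen : NoThreeCollinear G.V)
    (htri : G.IsTriangulation)
    (k : ℕ)
    (hk : k = Set.ncard {p : Pt | p ∈ G.V ∧
        p ∈ interior (convexHull ℝ (G.V : Set Pt))}) :
    3 * G.V.card + 4 * k - 14 ≤ starCount G := by
  obtain ⟨w, hw⟩ := exists_injOn_dotp G.V
  have hvint : k = G.interiorVertices.card := by
    rw [hk, ← Set.ncard_coe_finset]
    congr 1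
    ext p
    simp [PSLG.interiorVertices]
  have h1 := htri.card_middleFaces hgen (by omega) hw
  have h2 := PSLG.three_mul_card_middleFaces_le (G := G) w
  have h3 := htri.card_faces_le hgen
  have h4 := PSLG.card_facesWithPrev_le_card_facesWithNext (G := G)
  have h5 := PSLG.card_closedFaces_le hgen
  have h6 := PSLG.card_facesWithPrev_le_two_mul_card_quads hw
  have h7 := PSLG.card_le_card_pentagons (G := G)
  have h8 := PSLG.card_le_starCount hgen w
  omega

end
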